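/- arXiv:1202.0472 — 4 statements merged into one kernel-verified Lean document; each statement's English description precedes it below -/
import Mathlib

section
/- Let X ⊂ ℝⁿ, α ∈ (0,∞), p ∈ [2α,∞) and x ∈ ℝⁿ with positive lower α-density Θ_*^α(X,x) > 0. If I_p^α(X) < ∞, then X has a weak approximate α-tangent at x. -/
open MeasureTheory Metric Set Filter
open scoped ENNReal Topology Classical

noncomputable section

/-- The affine line through `x` and `y`. -/
def lineThrough {n : ℕ} (x y : EuclideanSpace ℝ (Fin n)) : Set (EuclideanSpace ℝ (Fin n)) :=
  {p | ∃ t : ℝ, p = x + t • (y - x)}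

/-- The inverse circumradius `κ(x,y,z)` of a triple of points, set to `0` when the
points are not pairwise distinct. -/
def kappa {n : ℕ} (x y z : EuclideanSpace ℝ (Fin n)) : ℝ≥0∞ :=
  if x ≠ y ∧ y ≠ z ∧ x ≠ z then
    ENNReal.ofReal (2 * Metric.infDist z (lineThrough x y) / (‖x - z‖ * ‖y - z‖))
  else 0

/-- `κ_G(x) = sup_{v,w ∈ X} κ(x,v,w)`. -/
def kappaG {n : ℕ} (X : Set (EuclideanSpace ℝ (Fin n))) (x : EuclideanSpace ℝ (Fin n)) : ℝ≥0∞ :=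
  ⨆ v ∈ X, ⨆ w ∈ X, kappa x v w

/-- `κ_i(x,y) = sup_{z ∈ X} κ(x,y,z)`. -/
def kappaI {n : ℕ} (X : Set (EuclideanSpace ℝ (Fin n))) (x y : EuclideanSpace ℝ (Fin n)) : ℝ≥0∞ :=
  ⨆ z ∈ X, kappa x y z

/-- The energy `U_p^α(X) = ∫_X κ_G(x)^p dH^α(x)`. -/
def energyU {n : ℕ} (p α : ℝ) (X : Set (EuclideanSpace ℝ (Fin n))) : ℝ≥0∞ :=
  ∫⁻ x in X, kappaG X x ^ p ∂ μH[α]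

/-- The energy `I_p^α(X) = ∫_X ∫_X κ_i(x,y)^p dH^α(x) dH^α(y)`. -/
def energyI {n : ℕ} (p α : ℝ) (X : Set (EuclideanSpace ℝ (Fin n))) : ℝ≥0∞ :=
  ∫⁻ y in X, ∫⁻ x in X, kappaI X x y ^ p ∂ μH[α] ∂ μH[α]

/-- The integral Menger curvature `M_p^α(X)`. -/
def energyM {n : ℕ} (p α : ℝ) (X : Set (EuclideanSpace ℝ (Fin n))) : ℝ≥0∞ :=
  ∫⁻ z in X, ∫⁻ y in X, ∫⁻ x in X, kappa x y z ^ p ∂ μH[α] ∂ μH[α] ∂ μH[α]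

/-- The open double cone about `x` in direction `s` with opening angle `ε`. -/
def cone {n : ℕ} (s : EuclideanSpace ℝ (Fin n)) (ε : ℝ) (x : EuclideanSpace ℝ (Fin n)) :
    Set (EuclideanSpace ℝ (Fin n)) :=
  {y | y ≠ x ∧
    min (InnerProductGeometry.angle (y - x) s) (InnerProductGeometry.angle (y - x) (-s)) < ε}

/-- `X` has an approximate `α`-tangent at `x`. -/
def HasApproxTangent {n : ℕ} (α : ℝ) (X : Set (EuclideanSpace ℝ (Fin n)))
    (x : EuclideanSpace ℝ (Fin n)) : Prop :=
  ∃ s : EuclideanSpace ℝ (Fin n), ‖s‖ = 1 ∧ ∀ ε > (0:ℝ),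
    Filter.Tendsto
      (fun r : ℝ => μH[α] ((X \ cone s ε x) ∩ Metric.closedBall x r) / ENNReal.ofReal (2 * r) ^ α)
      (𝓝[>] 0) (𝓝 0)

/-- `X` has a weak approximate `α`-tangent at `x`. -/
def HasWeakApproxTangent {n : ℕ} (α : ℝ) (X : Set (EuclideanSpace ℝ (Fin n)))
    (x : EuclideanSpace ℝ (Fin n)) : Prop :=
  ∃ ρ > (0:ℝ), ∃ s : ℝ → EuclideanSpace ℝ (Fin n), (∀ r ∈ Set.Ioo (0:ℝ) ρ, ‖s r‖ = 1) ∧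
    ∀ ε > (0:ℝ),
      Filter.Tendsto
        (fun r : ℝ =>
          μH[α] ((X \ cone (s r) ε x) ∩ Metric.closedBall x r) / ENNReal.ofReal (2 * r) ^ α)
        (𝓝[>] 0) (𝓝 0)

/-- Lower `α`-density of `X` at `x`. -/
def lowerDensity {n : ℕ} (α : ℝ) (X : Set (EuclideanSpace ℝ (Fin n)))
    (x : EuclideanSpace ℝ (Fin n)) : ℝ≥0∞ :=
  Filter.liminf
    (fun r : ℝ => μH[α] (X ∩ Metric.closedBall x r) / ENNReal.ofReal (2 * r) ^ α) (𝓝[>] 0)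

/-- Upper `α`-density of `X` at `x`. -/
def upperDensity {n : ℕ} (α : ℝ) (X : Set (EuclideanSpace ℝ (Fin n)))
    (x : EuclideanSpace ℝ (Fin n)) : ℝ≥0∞ :=
  Filter.limsup
    (fun r : ℝ => μH[α] (X ∩ Metric.closedBall x r) / ENNReal.ofReal (2 * r) ^ α) (𝓝[>] 0)

/-!
If `y` and `w` lie in the ball of radius `r` about a point `x` of the closure of `X`, and `w` is
outside the double cone of opening `ε` about the line through `x` and `y`, then the law of sines
bounds `κ_i(w, y)` below by `2 sin ε / (2r)`: approximate `x` by points of `X` as third vertex.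
Suppose that at some small scale `r` every double cone at `x` misses a portion of `X` of measure at
least `ε (2r)^α`. Let `y` range over `X ∩ B̄_r(x)`, which has measure at least `θ (2r)^α`, and `w`
over the portion missed by the cone in direction `y - x`. These pairs contribute at least
`(2 sin ε / (2r))^p · ε (2r)^α · θ (2r)^α ≥ (2 sin ε)^p ε θ` to the energy, because `p ≥ 2α`. But
the contribution of the pairs with `y ∈ B̄_r(x)` tends to zero with `r`. Hence for every `ε` and all
small `r` some direction is good, and a diagonal choice removes its dependence on `ε`.
-/

open InnerProductGeometry

section Geometry

variable {V : Type*} [NormedAddCommGroup V] [InnerProductSpace ℝ V]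

lemma sin_angle_mul_norm_mul_norm_le_norm_add_smul_mul_norm (a b : V) (t : ℝ) :
    Real.sin (angle a b) * (‖a‖ * ‖b‖) ≤ ‖a + t • (b - a)‖ * ‖b - a‖ := by
  -- Both pairs of vectors span a parallelogram of the same area.
  have shear_invariance : Real.sin (angle a b) * (‖a‖ * ‖b‖) =
      Real.sin (angle (a + t • (b - a)) (b - a)) * (‖a + t • (b - a)‖ * ‖b - a‖) := by
    rw [sin_angle_mul_norm_mul_norm, sin_angle_mul_norm_mul_norm]
    congr 1
    simp only [inner_add_left, inner_add_right, inner_sub_left, inner_sub_right,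
      real_inner_smul_left, real_inner_smul_right, real_inner_comm a b]
    ring
  rw [shear_invariance]
  exact mul_le_of_le_one_left (by positivity) (Real.sin_le_one _)

lemma sin_le_sin_of_le_of_le_pi_sub {ε φ : ℝ} (hε : 0 ≤ ε) (hφ : ε ≤ φ) (hφ' : ε ≤ Real.pi - φ) :
    Real.sin ε ≤ Real.sin φ := by
  rcases le_total φ (Real.pi / 2) with h | h
  · exact Real.sin_le_sin_of_le_of_le_pi_div_two (by linarith) h hφ
  · rw [← Real.sin_pi_sub φ]
    exact Real.sin_le_sin_of_le_of_le_pi_div_two (by linarith) (by linarith) hφ'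

end Geometry

section Curvature

variable {n : ℕ} {X : Set (EuclideanSpace ℝ (Fin n))} {x y z : EuclideanSpace ℝ (Fin n)}

lemma sin_angle_mul_norm_mul_norm_le_infDist_lineThrough (hxy : x ≠ y)
    (z : EuclideanSpace ℝ (Fin n)) :
    Real.sin (angle (x - z) (y - z)) * (‖x - z‖ * ‖y - z‖) ≤
      infDist z (lineThrough x y) * ‖x - y‖ := by
  have hpos : 0 < ‖x - y‖ := norm_sub_pos_iff.mpr hxy
  have hne : (lineThrough x y).Nonempty := ⟨x, 0, by simp⟩
  rw [← div_le_iff₀ hpos, le_infDist hne]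
  rintro _ ⟨t, rfl⟩
  have harea := sin_angle_mul_norm_mul_norm_le_norm_add_smul_mul_norm (x - z) (y - z) t
  rw [sub_sub_sub_cancel_right] at harea
  rwa [div_le_iff₀ hpos, dist_comm, dist_eq_norm, norm_sub_rev x y, add_sub_right_comm]

lemma ofReal_sin_angle_div_norm_le_kappa (hxy : x ≠ y) (hxz : x ≠ z) (hyz : y ≠ z) :
    ENNReal.ofReal (2 * Real.sin (angle (x - z) (y - z)) / ‖x - y‖) ≤ kappa x y z := by
  have hxy' : 0 < ‖x - y‖ := norm_sub_pos_iff.mpr hxy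
  have hxz' : 0 < ‖x - z‖ := norm_sub_pos_iff.mpr hxz
  have hyz' : 0 < ‖y - z‖ := norm_sub_pos_iff.mpr hyz
  rw [kappa, if_pos ⟨hxy, hyz, hxz⟩]
  apply ENNReal.ofReal_le_ofReal
  rw [div_le_div_iff₀ hxy' (by positivity), mul_assoc, mul_assoc]
  gcongr 2 * ?_
  exact sin_angle_mul_norm_mul_norm_le_infDist_lineThrough hxy z

lemma ofReal_sin_angle_div_norm_le_kappaI (hz : z ∈ closure X) (hxy : x ≠ y) (hxz : x ≠ z)
    (hyz : y ≠ z) :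
    ENNReal.ofReal (2 * Real.sin (angle (x - z) (y - z)) / ‖x - y‖) ≤ kappaI X x y := by
  have hangle : ContinuousAt (fun u => angle (x - u) (y - u)) z :=
    (continuousAt_angle (x := (x - z, y - z)) (sub_ne_zero.mpr hxz) (sub_ne_zero.mpr hyz)).comp
      (f := fun u => (x - u, y - u)) (by fun_prop)
  have hcont : ContinuousAt
      (fun u => ENNReal.ofReal (2 * Real.sin (angle (x - u) (y - u)) / ‖x - y‖)) z :=
    ENNReal.continuous_ofReal.continuousAt.comp
      (((Real.continuous_sin.continuousAt.comp hangle).const_mul 2).div_const _)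
  refine le_of_tendsto_of_frequently hcont ?_
  refine ((mem_closure_iff_frequently.mp hz).and_eventually
    ((eventually_ne_nhds hxz.symm).and (eventually_ne_nhds hyz.symm))).mono ?_
  rintro u ⟨huX, hux, huy⟩
  exact (ofReal_sin_angle_div_norm_le_kappa hxy hux.symm huy.symm).trans
    (le_iSup₂ (f := fun w (_ : w ∈ X) => kappa x y w) u huX)

end Curvature

section Cone

variable {n : ℕ} {X : Set (EuclideanSpace ℝ (Fin n))} {s x y z : EuclideanSpace ℝ (Fin n)} {ε : ℝ}

lemma cone_mono {η : ℝ} (h : η ≤ ε) : cone s η x ⊆ cone s ε x :=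
  fun _ hy => ⟨hy.1, hy.2.trans_le h⟩

lemma cone_smul {c : ℝ} (hc : 0 < c) : cone (c • s) ε x = cone s ε x := by
  simp only [cone, ← smul_neg, angle_smul_right_of_pos _ _ hc]

lemma mem_cone_sub (hε : 0 < ε) (hyx : y ≠ x) : y ∈ cone (y - x) ε x :=
  ⟨hyx, (min_le_left _ _).trans_lt (by rwa [angle_self (sub_ne_zero.mpr hyx)])⟩

lemma sin_le_sin_angle_of_notMem_cone (hε : 0 ≤ ε) (hyx : y ≠ x) (hy : y ∉ cone s ε x) :
    Real.sin ε ≤ Real.sin (angle (y - x) s) := by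
  obtain ⟨h, h'⟩ : ε ≤ angle (y - x) s ∧ ε ≤ angle (y - x) (-s) :=
    le_min_iff.mp (not_lt.mp fun hlt => hy ⟨hyx, hlt⟩)
  exact sin_le_sin_of_le_of_le_pi_sub hε h (angle_neg_right (y - x) s ▸ h')

lemma measurableSet_cone (s x : EuclideanSpace ℝ (Fin n)) (ε : ℝ) :
    MeasurableSet (cone s ε x) := by
  have hangle (v : EuclideanSpace ℝ (Fin n)) : Measurable fun y => angle (y - x) v := by
    unfold angle
    fun_prop
  exact (measurableSet_singleton x).compl.inter
    (measurableSet_lt ((hangle s).min (hangle (-s))) measurable_const)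

lemma ofReal_sin_div_le_kappaI_of_notMem_cone {r : ℝ} (hx : x ∈ closure X) (hε : 0 < ε)
    (hy : y ∈ closedBall x r) (hyx : y ≠ x) (hz : z ∈ closedBall x r) (hzx : z ≠ x)
    (hzy : z ∉ cone (y - x) ε x) :
    ENNReal.ofReal (2 * Real.sin ε / (2 * r)) ≤ kappaI X z y := by
  have hne : z ≠ y := by
    rintro rfl
    exact hzy (mem_cone_sub hε hzx)
  have hpos : 0 < ‖z - y‖ := norm_sub_pos_iff.mpr hne
  have hdist : ‖z - y‖ ≤ 2 * r := by
    rw [← dist_eq_norm, two_mul]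
    exact dist_triangle_right z y x |>.trans (add_le_add hz hy)
  have hsin : 0 ≤ Real.sin (angle (z - x) (y - x)) := sin_angle_nonneg _ _
  refine le_trans (ENNReal.ofReal_le_ofReal ?_)
    (ofReal_sin_angle_div_norm_le_kappaI hx hne hzx hyx)
  calc 2 * Real.sin ε / (2 * r)
      ≤ 2 * Real.sin (angle (z - x) (y - x)) / (2 * r) := by
        have := hpos.trans_le hdist
        gcongr
        exact sin_le_sin_angle_of_notMem_cone hε.le hzx hzy
    _ ≤ 2 * Real.sin (angle (z - x) (y - x)) / ‖z - y‖ := by gcongr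

end Cone

section Energy

variable {n : ℕ} {X : Set (EuclideanSpace ℝ (Fin n))} {x y : EuclideanSpace ℝ (Fin n)}
  {μ : Measure (EuclideanSpace ℝ (Fin n))} [NullSingletonClass μ] {p r ε : ℝ}

/- `X` is an arbitrary set and `κ_i` need not be measurable, so the integrals are estimated over
Borel sets with respect to `μ.restrict X`, for which lower bounds on the integrand suffice. -/

lemma rpow_mul_measure_sdiff_cone_le_lintegral_kappaI (hx : x ∈ closure X) (hp : 0 ≤ p)
    (hε : 0 < ε) (hy : y ∈ closedBall x r) (hyx : y ≠ x) :
    ENNReal.ofReal (2 * Real.sin ε / (2 * r)) ^ p *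
        μ ((X \ cone (y - x) ε x) ∩ closedBall x r) ≤
      ∫⁻ w in X, kappaI X w y ^ p ∂μ := by
  set T := closedBall x r \ cone (y - x) ε x with hT
  have hTmeas : MeasurableSet T := measurableSet_closedBall.diff (measurableSet_cone _ _ _)
  have hkappa : ∀ w ∈ T \ {x},
      ENNReal.ofReal (2 * Real.sin ε / (2 * r)) ^ p ≤ kappaI X w y ^ p := fun w hw =>
    ENNReal.rpow_le_rpow
      (ofReal_sin_div_le_kappaI_of_notMem_cone hx hε hy hyx hw.1.1 hw.2 hw.1.2) hp
  have hmeasure : μ ((X \ cone (y - x) ε x) ∩ closedBall x r) = μ.restrict X (T \ {x}) := by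
    rw [measure_sdiff_null (measure_singleton x), Measure.restrict_apply hTmeas, hT]
    congr 1
    tauto_set
  calc ENNReal.ofReal (2 * Real.sin ε / (2 * r)) ^ p *
        μ ((X \ cone (y - x) ε x) ∩ closedBall x r)
      ≤ (⨅ w ∈ T \ {x}, kappaI X w y ^ p) * μ.restrict X (T \ {x}) := by
        rw [hmeasure]
        gcongr
        exact le_iInf₂ hkappa
    _ ≤ ∫⁻ w in T \ {x}, kappaI X w y ^ p ∂μ.restrict X :=
        iInf_mul_le_setLIntegral _ (hTmeas.diff (measurableSet_singleton x))
    _ ≤ ∫⁻ w in X, kappaI X w y ^ p ∂μ := setLIntegral_le_lintegral _ _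

lemma rpow_mul_measure_inter_closedBall_le_setLIntegral_kappaI {m : ℝ≥0∞} (hx : x ∈ closure X)
    (hp : 0 ≤ p) (hε : 0 < ε)
    (hm : ∀ s, ‖s‖ = 1 → m ≤ μ ((X \ cone s ε x) ∩ closedBall x r)) :
    ENNReal.ofReal (2 * Real.sin ε / (2 * r)) ^ p * m * μ (X ∩ closedBall x r) ≤
      ∫⁻ y in closedBall x r, ∫⁻ w in X, kappaI X w y ^ p ∂μ ∂μ.restrict X := by
  set κp := ENNReal.ofReal (2 * Real.sin ε / (2 * r)) ^ p
  have hinner : ∀ y ∈ closedBall x r \ {x}, κp * m ≤ ∫⁻ w in X, kappaI X w y ^ p ∂μ := by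
    rintro y ⟨hy, hyx⟩
    have hnorm : 0 < ‖y - x‖ := norm_sub_pos_iff.mpr hyx
    have hmy := hm (‖y - x‖⁻¹ • (y - x)) (norm_smul_inv_norm (norm_pos_iff.mp hnorm))
    rw [cone_smul (inv_pos.mpr hnorm)] at hmy
    exact (mul_le_mul_right hmy κp).trans
      (rpow_mul_measure_sdiff_cone_le_lintegral_kappaI hx hp hε hy hyx)
  have hmeasure : μ (X ∩ closedBall x r) = μ.restrict X (closedBall x r \ {x}) := by
    rw [measure_sdiff_null (measure_singleton x), Measure.restrict_apply measurableSet_closedBall,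
      inter_comm]
  calc κp * m * μ (X ∩ closedBall x r)
      ≤ (⨅ y ∈ closedBall x r \ {x}, ∫⁻ w in X, kappaI X w y ^ p ∂μ) *
          μ.restrict X (closedBall x r \ {x}) := by
        rw [hmeasure]
        gcongr
        exact le_iInf₂ hinner
    _ ≤ ∫⁻ y in closedBall x r \ {x}, ∫⁻ w in X, kappaI X w y ^ p ∂μ ∂μ.restrict X :=
        iInf_mul_le_setLIntegral _ (measurableSet_closedBall.diff (measurableSet_singleton x))
    _ ≤ ∫⁻ y in closedBall x r, ∫⁻ w in X, kappaI X w y ^ p ∂μ ∂μ.restrict X :=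
        lintegral_mono_set sdiff_subset

end Energy

lemma tendsto_setLIntegral_closedBall_nhdsGT_zero {E : Type*} [MetricSpace E] [MeasurableSpace E]
    [OpensMeasurableSpace E] {μ : Measure E} [NullSingletonClass μ] {f : E → ℝ≥0∞}
    (hf : ∫⁻ y, f y ∂μ ≠ ⊤) (x : E) :
    Tendsto (fun r => ∫⁻ y in closedBall x r, f y ∂μ) (𝓝[>] 0) (𝓝 0) := by
  have hfinite : IsFiniteMeasure (μ.withDensity f) := isFiniteMeasure_withDensity hf
  have hlim : Tendsto (fun r => μ.withDensity f (cthickening r {x})) (𝓝[>] 0)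
      (𝓝 (μ.withDensity f {x})) :=
    (tendsto_measure_cthickening_of_isClosed ⟨1, one_pos, measure_ne_top _ _⟩
      isClosed_singleton).mono_left nhdsWithin_le_nhds
  rw [measure_singleton] at hlim
  refine hlim.congr' ?_
  filter_upwards [self_mem_nhdsWithin] with r hr
  rw [cthickening_singleton x (le_of_lt hr), withDensity_apply _ measurableSet_closedBall]

lemma ofReal_rpow_le_ofReal_div_rpow_mul {c d α p : ℝ} (hd : 0 < d) (hd1 : d ≤ 1) (hp : 0 ≤ p)
    (hαp : 2 * α ≤ p) :
    ENNReal.ofReal c ^ p ≤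
      ENNReal.ofReal (c / d) ^ p * (ENNReal.ofReal d ^ α * ENNReal.ofReal d ^ α) := by
  have hd0 : ENNReal.ofReal d ≠ 0 := (ENNReal.ofReal_pos.mpr hd).ne'
  calc ENNReal.ofReal c ^ p
      = ENNReal.ofReal (c / d) ^ p * ENNReal.ofReal d ^ p := by
        rw [← ENNReal.mul_rpow_of_nonneg _ _ hp, ← ENNReal.ofReal_mul' hd.le,
          div_mul_cancel₀ _ hd.ne']
    _ ≤ ENNReal.ofReal (c / d) ^ p * ENNReal.ofReal d ^ (2 * α) := by
        refine mul_le_mul_right ?_ _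
        exact ENNReal.rpow_le_rpow_of_exponent_ge (ENNReal.ofReal_le_one.mpr hd1) hαp
    _ = ENNReal.ofReal (c / d) ^ p * (ENNReal.ofReal d ^ α * ENNReal.ofReal d ^ α) := by
        rw [two_mul, ENNReal.rpow_add _ _ hd0 ENNReal.ofReal_ne_top]

section DensityRatio

variable {E : Type*} [MetricSpace E] [MeasurableSpace E] [BorelSpace E] {α : ℝ}

/-- The ratio `H^α(A ∩ B̄_r(x)) / (2r)^α`. Its lower limit as `r → 0⁺` is `lowerDensity`, and
`HasWeakApproxTangent` asks it to vanish in the limit for `A = X \ cone (s r) ε x`. -/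
def densityRatio (α : ℝ) (A : Set E) (x : E) (r : ℝ) : ℝ≥0∞ :=
  μH[α] (A ∩ closedBall x r) / ENNReal.ofReal (2 * r) ^ α

lemma densityRatio_mono {A B : Set E} (h : A ⊆ B) (x : E) (r : ℝ) :
    densityRatio α A x r ≤ densityRatio α B x r := by
  unfold densityRatio
  gcongr

variable {n : ℕ} {X : Set (EuclideanSpace ℝ (Fin n))} {x : EuclideanSpace ℝ (Fin n)} {p : ℝ}

lemma densityRatio_sdiff_cone_anti (s : EuclideanSpace ℝ (Fin n)) {η ε : ℝ} (h : η ≤ ε) (r : ℝ) :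
    densityRatio α (X \ cone s ε x) x r ≤ densityRatio α (X \ cone s η x) x r :=
  densityRatio_mono (sdiff_subset_sdiff_right (cone_mono h)) x r

lemma mem_closure_of_lowerDensity_pos (hd : 0 < lowerDensity α X x) : x ∈ closure X := by
  rw [mem_closure_iff_nhds_basis nhds_basis_closedBall]
  intro δ hδ
  have hpos : ∀ᶠ r in 𝓝[>] 0, 0 < densityRatio α X x r := eventually_lt_of_lt_liminf hd
  obtain ⟨r, hr, hrδ⟩ := (hpos.and (Ioo_mem_nhdsGT hδ)).exists
  obtain ⟨y, hyX, hyr⟩ : (X ∩ closedBall x r).Nonempty :=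
    nonempty_of_measure_ne_zero (ENNReal.div_pos_iff.mp hr).1
  exact ⟨y, hyX, closedBall_subset_closedBall hrδ.2.le hyr⟩

lemma rpow_mul_mul_le_setLIntegral_kappaI_of_le_densityRatio {r ε : ℝ} {θ m : ℝ≥0∞} (hα : 0 < α)
    (hαp : 2 * α ≤ p) (hx : x ∈ closure X) (hε : 0 < ε) (hr : 0 < r) (hr1 : 2 * r ≤ 1)
    (hθ : θ ≤ densityRatio α X x r)
    (hm : ∀ s, ‖s‖ = 1 → m ≤ densityRatio α (X \ cone s ε x) x r) :
    ENNReal.ofReal (2 * Real.sin ε) ^ p * m * θ ≤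
      ∫⁻ y in closedBall x r, ∫⁻ w in X, kappaI X w y ^ p ∂μH[α] ∂μH[α].restrict X := by
  have : NullSingletonClass (μH[α] : Measure (EuclideanSpace ℝ (Fin n))) :=
    Measure.nullSingletonClass_hausdorff _ hα
  have hp : 0 ≤ p := by linarith
  set R := ENNReal.ofReal (2 * r) ^ α
  calc ENNReal.ofReal (2 * Real.sin ε) ^ p * m * θ
      ≤ ENNReal.ofReal (2 * Real.sin ε / (2 * r)) ^ p * (R * R) * m * θ := by
        gcongr
        exact ofReal_rpow_le_ofReal_div_rpow_mul (by positivity) hr1 hp hαp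
    _ = ENNReal.ofReal (2 * Real.sin ε / (2 * r)) ^ p * (m * R) * (θ * R) := by ring
    _ ≤ ENNReal.ofReal (2 * Real.sin ε / (2 * r)) ^ p * (m * R) * μH[α] (X ∩ closedBall x r) := by
        gcongr
        exact ENNReal.mul_le_of_le_div hθ
    _ ≤ _ := rpow_mul_measure_inter_closedBall_le_setLIntegral_kappaI hx hp hε
        fun s hs => ENNReal.mul_le_of_le_div (hm s hs)

lemma eventually_exists_densityRatio_sdiff_cone_le (hα : 0 < α) (hαp : 2 * α ≤ p)
    (hd : 0 < lowerDensity α X x) (hE : energyI p α X ≠ ⊤) {ε : ℝ} (hε : 0 < ε)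
    (hεπ : ε < Real.pi) :
    ∀ᶠ r in 𝓝[>] 0, ∃ s : sphere (0 : EuclideanSpace ℝ (Fin n)) 1,
      densityRatio α (X \ cone s ε x) x r ≤ ENNReal.ofReal ε := by
  have : NullSingletonClass (μH[α] : Measure (EuclideanSpace ℝ (Fin n))) :=
    Measure.nullSingletonClass_hausdorff _ hα
  obtain ⟨θ, hθpos, hθ⟩ := exists_between hd
  have hdensity : ∀ᶠ r in 𝓝[>] 0, θ < densityRatio α X x r := eventually_lt_of_lt_liminf hθ
  have hbound : 0 < ENNReal.ofReal (2 * Real.sin ε) ^ p * ENNReal.ofReal ε * θ := by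
    have hsin : 0 < Real.sin ε := Real.sin_pos_of_pos_of_lt_pi hε hεπ
    have hpow : 0 < ENNReal.ofReal (2 * Real.sin ε) ^ p :=
      ENNReal.rpow_pos (ENNReal.ofReal_pos.mpr (by positivity)) ENNReal.ofReal_ne_top
    have hε' : 0 < ENNReal.ofReal ε := ENNReal.ofReal_pos.mpr hε
    exact ENNReal.mul_pos (mul_ne_zero hpow.ne' hε'.ne') hθpos.ne'
  have henergy := (tendsto_setLIntegral_closedBall_nhdsGT_zero hE x).eventually_lt_const hbound
  filter_upwards [hdensity, henergy, Ioo_mem_nhdsGT one_half_pos] with r hθr hEr ⟨hr, hr1⟩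
  by_contra! hbad
  refine hEr.not_ge (rpow_mul_mul_le_setLIntegral_kappaI_of_le_densityRatio hα hαp
    (mem_closure_of_lowerDensity_pos hd) hε hr (by linarith) hθr.le fun s hs => ?_)
  exact (hbad ⟨s, mem_sphere_zero_iff_norm.mpr hs⟩).le

end DensityRatio

lemma exists_selection_of_forall_eventually_exists {ι S : Type*} {l : Filter ι} [l.NeBot]
    {δ : ι → ℝ} (hδ : Tendsto δ l (𝓝[>] 0)) {P : ι → S → ℝ → Prop}
    (hmono : ∀ i s, Monotone (P i s)) (hP : ∀ η > 0, ∀ᶠ i in l, ∃ s, P i s η) :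
    ∃ s : ι → S, ∀ η > 0, ∀ᶠ i in l, P i (s i) η := by
  have : Nonempty S := let ⟨_, s, _⟩ := (hP 1 one_pos).exists; ⟨s⟩
  let admissible (i : ι) : Set ℝ := {η | 0 < η ∧ ∃ s, P i s η}
  have hbdd (i : ι) : BddBelow (admissible i) := ⟨0, fun _ hη => hη.1.le⟩
  -- `s i` realises the infimum of the admissible parameters up to the error `δ i`.
  have near_inf (i : ι) : ∃ s, 0 < δ i → (admissible i).Nonempty →
      P i s (sInf (admissible i) + δ i) := by
    by_cases h : 0 < δ i ∧ (admissible i).Nonempty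
    · obtain ⟨η, ⟨-, s, hs⟩, hlt⟩ := Real.lt_sInf_add_pos h.2 h.1
      exact ⟨s, fun _ _ => hmono i s hlt.le hs⟩
    · exact ⟨Classical.arbitrary S, fun hpos hne => absurd ⟨hpos, hne⟩ h⟩
  choose s hs using near_inf
  refine ⟨s, fun η hη => ?_⟩
  filter_upwards [hP (η / 2) (half_pos hη), hδ (Ioo_mem_nhdsGT (half_pos hη))]
    with i hi ⟨hδpos, hδlt⟩
  have hmem : η / 2 ∈ admissible i := ⟨half_pos hη, hi⟩
  exact hmono i (s i) (by linarith [csInf_le (hbdd i) hmem]) (hs i hδpos ⟨_, hmem⟩)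

lemma hasWeakApproxTangent_of_forall_eventually_exists {n : ℕ} {α : ℝ}
    {X : Set (EuclideanSpace ℝ (Fin n))} {x : EuclideanSpace ℝ (Fin n)}
    (h : ∀ ε > 0, ∀ᶠ r in 𝓝[>] 0, ∃ s : sphere (0 : EuclideanSpace ℝ (Fin n)) 1,
      densityRatio α (X \ cone s ε x) x r ≤ ENNReal.ofReal ε) :
    HasWeakApproxTangent α X x := by
  obtain ⟨s, hs⟩ := exists_selection_of_forall_eventually_exists tendsto_id
    (fun r s _ _ hηε hη => (densityRatio_sdiff_cone_anti s.1 hηε r).trans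
      (hη.trans (ENNReal.ofReal_le_ofReal hηε))) h
  refine ⟨1, one_pos, fun r => s r, fun r _ => norm_eq_of_mem_sphere (s r), fun ε hε => ?_⟩
  refine ENNReal.tendsto_nhds_zero.mpr fun δ hδ => ?_
  obtain ⟨δ', -, hδ', hδ'δ⟩ := ENNReal.lt_iff_exists_real_btwn.mp hδ
  filter_upwards [hs (min ε δ') (lt_min hε (ENNReal.ofReal_pos.mp hδ'))] with r hr
  calc densityRatio α (X \ cone (s r) ε x) x r
      ≤ densityRatio α (X \ cone (s r) (min ε δ') x) x r :=
        densityRatio_sdiff_cone_anti _ (min_le_left _ _) r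
    _ ≤ ENNReal.ofReal (min ε δ') := hr
    _ ≤ ENNReal.ofReal δ' := ENNReal.ofReal_le_ofReal (min_le_right _ _)
    _ ≤ δ := hδ'δ.le

theorem finite_energyI_implies_weak_approx_tangent (n : ℕ) (X : Set (EuclideanSpace ℝ (Fin n)))
    (α p : ℝ) (hα : α ∈ Set.Ioi (0 : ℝ)) (hp : p ∈ Set.Ici (2 * α))
    (x : EuclideanSpace ℝ (Fin n)) (hd : 0 < lowerDensity α X x)
    (hE : energyI p α X < ⊤) :
    HasWeakApproxTangent α X x := by
  refine hasWeakApproxTangent_of_forall_eventually_exists fun ε hε => ?_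
  have hsmall : min ε 1 < Real.pi := (min_le_right ε 1).trans_lt (by linarith [Real.pi_gt_three])
  filter_upwards [eventually_exists_densityRatio_sdiff_cone_le hα hp hd hE.ne
    (lt_min hε one_pos) hsmall] with r ⟨s, hs⟩
  exact ⟨s, (densityRatio_sdiff_cone_anti s.1 (min_le_left ε 1) r).trans
    (hs.trans (ENNReal.ofReal_le_ofReal (min_le_left ε 1)))⟩

end
end

section
/- Let E = ([−1,1]×{0}) ∪ ({0}×[0,1]) ⊂ ℝ². For every p ∈ (0,1) one has U_p^1(E) ≤ 6/(1−p); in particular U_p^1(E) < ∞. -/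
open MeasureTheory Metric Set Filter
open scoped ENNReal Topology Classical

noncomputable section

/-- The T-shaped set `E = ([-1,1] × {0}) ∪ ({0} × [0,1])` in `ℝ²`. -/
def Eset : Set (EuclideanSpace ℝ (Fin 2)) :=
  {p | p 1 = 0 ∧ p 0 ∈ Set.Icc (-1 : ℝ) 1} ∪ {p | p 0 = 0 ∧ p 1 ∈ Set.Icc (0 : ℝ) 1}

/-!
A circle through three points has diameter at least the distance between any two of them, so
`κ(x,v,w) ≤ 2 / |x - v|` and `κ(x,v,w) ≤ 2 / |x - w|`, while `κ` vanishes on collinear triples.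
If `x` lies on one of the two axes, a triple of points of `E` containing `x` is either collinear or
contains a point of the other axis, which is at distance at least `|x|` from `x`. Therefore
`κ_G(x) ≤ 2 / |x|` on `E`, and each of the three unit segments that make up `E` contributes at most
`∫₀¹ (2 / t) ^ p dt = 2 ^ p / (1 - p) ≤ 2 / (1 - p)` to the energy.
-/

section InnerProductSpace

variable {F : Type*} [NormedAddCommGroup F] [InnerProductSpace ℝ F]

lemma norm_sub_smul_inner_mul_norm_le (u d : F) :
    ‖u - (inner ℝ u d / ‖d‖ ^ 2) • d‖ * ‖d‖ ≤ ‖u‖ * ‖d - u‖ := by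
  rcases eq_or_ne d 0 with rfl | hd
  · simp [mul_self_nonneg]
  have hd_norm : ‖d‖ ≠ 0 := norm_ne_zero_iff.mpr hd
  have h_sq_add_sq : (‖u - (inner ℝ u d / ‖d‖ ^ 2) • d‖ * ‖d‖) ^ 2 + (‖u‖ ^ 2 - inner ℝ u d) ^ 2
      = (‖u‖ * ‖d - u‖) ^ 2 := by
    rw [mul_pow, mul_pow, norm_sub_sq_real, norm_sub_sq_real, norm_smul, inner_smul_right,
      real_inner_comm u d, mul_pow, Real.norm_eq_abs, sq_abs]
    field_simp
    ring
  exact le_of_sq_le_sq (by nlinarith [sq_nonneg (‖u‖ ^ 2 - inner ℝ u d)]) (by positivity)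

lemma enorm_le_infEDist_smul_orthogonal {e : F} (he : ‖e‖ = 1) (t : ℝ) :
    ‖t‖ₑ ≤ infEDist (t • e) (ℝ ∙ e)ᗮ := by
  refine le_infEDist.mpr fun v hv => ?_
  have he_inner : inner ℝ e (t • e - v) = t := by
    rw [inner_sub_right, inner_smul_right, real_inner_self_eq_norm_sq, he,
      Submodule.mem_orthogonal_singleton_iff_inner_right.mp hv]
    ring
  have h_norm : ‖t‖ ≤ ‖t • e - v‖ := by
    simpa [he_inner, he] using norm_inner_le_norm (𝕜 := ℝ) e (t • e - v)
  rw [edist_eq_enorm_sub]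
  exact enorm_le_iff_norm_le.mpr h_norm

end InnerProductSpace

section Curvature

variable {n : ℕ} {x y z : EuclideanSpace ℝ (Fin n)} {X : Set (EuclideanSpace ℝ (Fin n))}

lemma lineThrough_eq_affineSpan (x y : EuclideanSpace ℝ (Fin n)) :
    lineThrough x y = (line[ℝ, x, y] : Set (EuclideanSpace ℝ (Fin n))) := by
  ext q
  simp [lineThrough, mem_affineSpan_pair_iff_exists_lineMap_eq,
    AffineMap.lineMap_apply, add_comm, eq_comm]

lemma infDist_lineThrough_le_norm_sub_right (x y z : EuclideanSpace ℝ (Fin n)) :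
    infDist z (lineThrough x y) ≤ ‖y - z‖ := by
  rw [lineThrough_eq_affineSpan, ← dist_eq_norm, dist_comm]
  exact infDist_le_dist_of_mem (right_mem_affineSpan_pair ℝ x y)

lemma infDist_lineThrough_mul_norm_le (x y z : EuclideanSpace ℝ (Fin n)) :
    infDist z (lineThrough x y) * ‖x - y‖ ≤ ‖x - z‖ * ‖y - z‖ := by
  set t := inner ℝ (z - x) (y - x) / ‖y - x‖ ^ 2
  have h_foot : infDist z (lineThrough x y) ≤ ‖(z - x) - t • (y - x)‖ := by
    rw [sub_sub, ← dist_eq_norm]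
    exact infDist_le_dist_of_mem ⟨t, rfl⟩
  calc infDist z (lineThrough x y) * ‖x - y‖
      ≤ ‖(z - x) - t • (y - x)‖ * ‖y - x‖ := by
        rw [norm_sub_rev x y]
        gcongr
    _ ≤ ‖z - x‖ * ‖(y - x) - (z - x)‖ := norm_sub_smul_inner_mul_norm_le _ _
    _ = ‖x - z‖ * ‖y - z‖ := by rw [norm_sub_rev x z, sub_sub_sub_cancel_right]

lemma kappa_le_two_div_edist_of_infDist_mul_norm_le {a b : EuclideanSpace ℝ (Fin n)}
    (h : infDist z (lineThrough x y) * ‖a - b‖ ≤ ‖x - z‖ * ‖y - z‖) :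
    kappa x y z ≤ 2 / edist a b := by
  rcases eq_or_ne a b with rfl | hab
  · simp [ENNReal.div_zero]
  unfold kappa
  split_ifs with hne
  · have hyz_pos : 0 < ‖y - z‖ := norm_sub_pos_iff.mpr hne.2.1
    have hxz_pos : 0 < ‖x - z‖ := norm_sub_pos_iff.mpr hne.2.2
    have hab_pos : 0 < ‖a - b‖ := norm_sub_pos_iff.mpr hab
    calc ENNReal.ofReal (2 * infDist z (lineThrough x y) / (‖x - z‖ * ‖y - z‖))
        ≤ ENNReal.ofReal (2 / ‖a - b‖) := by
          refine ENNReal.ofReal_le_ofReal ?_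
          rw [div_le_div_iff₀ (by positivity) hab_pos, mul_assoc]
          gcongr
      _ = 2 / edist a b := by
          rw [ENNReal.ofReal_div_of_pos hab_pos, ENNReal.ofReal_ofNat, edist_dist, dist_eq_norm]
  · exact zero_le

lemma kappa_le_two_div_edist_left (x y z : EuclideanSpace ℝ (Fin n)) :
    kappa x y z ≤ 2 / edist x y :=
  kappa_le_two_div_edist_of_infDist_mul_norm_le (infDist_lineThrough_mul_norm_le x y z)

lemma kappa_le_two_div_edist_right (x y z : EuclideanSpace ℝ (Fin n)) :
    kappa x y z ≤ 2 / edist x z := by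
  refine kappa_le_two_div_edist_of_infDist_mul_norm_le ?_
  rw [mul_comm ‖x - z‖]
  gcongr
  exact infDist_lineThrough_le_norm_sub_right x y z

lemma kappa_eq_zero_of_collinear (h : Collinear ℝ {x, y, z}) : kappa x y z = 0 := by
  unfold kappa
  split_ifs with hne
  · have hz : z ∈ lineThrough x y := by
      rw [lineThrough_eq_affineSpan]
      exact h.mem_affineSpan_of_mem_of_ne (by simp) (by simp) (by simp) hne.1
    simp [infDist_zero_of_mem hz]
  · rfl

lemma kappaG_le_two_div_infEDist {L Y : Set (EuclideanSpace ℝ (Fin n))} (hL : Collinear ℝ L)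
    (hx : x ∈ L) (hX : X ⊆ L ∪ Y) : kappaG X x ≤ 2 / infEDist x Y := by
  refine iSup₂_le fun v hv => iSup₂_le fun w hw => ?_
  rcases hX hv with hvL | hvY
  · rcases hX hw with hwL | hwY
    · have h_collinear : Collinear ℝ {x, v, w} :=
        hL.subset (by simp [insert_subset_iff, hx, hvL, hwL])
      simp [kappa_eq_zero_of_collinear h_collinear]
    · exact (kappa_le_two_div_edist_right x v w).trans
        (ENNReal.div_le_div_left (infEDist_le_edist_of_mem hwY) 2)
  · exact (kappa_le_two_div_edist_left x v w).trans
      (ENNReal.div_le_div_left (infEDist_le_edist_of_mem hvY) 2)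

lemma kappaG_smul_le_two_div_enorm {e : EuclideanSpace ℝ (Fin n)} (he : ‖e‖ = 1)
    (hX : X ⊆ (ℝ ∙ e : Set _) ∪ (ℝ ∙ e)ᗮ) (t : ℝ) : kappaG X (t • e) ≤ 2 / ‖t‖ₑ := by
  have h_collinear : Collinear ℝ ((ℝ ∙ e : Submodule ℝ _) : Set (EuclideanSpace ℝ (Fin n))) :=
    (collinear_iff_exists_forall_eq_smul_vadd _).mpr ⟨0, e, fun q hq => by
      obtain ⟨a, rfl⟩ := Submodule.mem_span_singleton.mp hq
      exact ⟨a, by simp⟩⟩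
  exact (kappaG_le_two_div_infEDist h_collinear
    (Submodule.smul_mem _ t (Submodule.mem_span_singleton_self e)) hX).trans
    (ENNReal.div_le_div_left (enorm_le_infEDist_smul_orthogonal he t) 2)

end Curvature

section Integration

lemma setLIntegral_hausdorffMeasure_image_of_isometry {S T : Type*}
    [EMetricSpace S] [CompleteSpace S] [MeasurableSpace S] [BorelSpace S]
    [EMetricSpace T] [MeasurableSpace T] [BorelSpace T]
    {f : S → T} (hf : Isometry f) {d : ℝ} (hd : 0 ≤ d) (s : Set S) (g : T → ℝ≥0∞) :
    ∫⁻ y in f '' s, g y ∂μH[d] = ∫⁻ x in s, g (f x) ∂μH[d] := by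
  have hf_emb : MeasurableEmbedding f := hf.isClosedEmbedding.measurableEmbedding
  have h_restrict : Measure.map f (μH[d].restrict s) = μH[d].restrict (f '' s) := by
    rw [← Measure.restrict_restrict_of_subset (image_subset_range f s),
      ← hf.map_hausdorffMeasure (.inl hd), hf_emb.restrict_map,
      hf.injective.preimage_image]
  rw [← h_restrict, hf_emb.lintegral_map]

lemma lintegral_Ioc_ofReal_rpow {b r : ℝ} (hb : 0 ≤ b) (hr : -1 < r) :
    ∫⁻ t in Ioc 0 b, ENNReal.ofReal (t ^ r) = ENNReal.ofReal (b ^ (r + 1) / (r + 1)) := by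
  have h_int : IntegrableOn (fun t : ℝ => t ^ r) (Ioc 0 b) :=
    (intervalIntegrable_iff_integrableOn_Ioc_of_le hb).mp
      (intervalIntegral.intervalIntegrable_rpow' hr)
  have h_nonneg : 0 ≤ᵐ[volume.restrict (Ioc 0 b)] fun t : ℝ => t ^ r := by
    filter_upwards [ae_restrict_mem measurableSet_Ioc] with t ht
    exact Real.rpow_nonneg ht.1.le r
  rw [← ofReal_integral_eq_lintegral_ofReal h_int h_nonneg,
    ← intervalIntegral.integral_of_le hb, integral_rpow (.inl hr),
    Real.zero_rpow (by linarith), sub_zero]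

lemma lintegral_Icc_div_enorm_rpow (c : ℝ≥0∞) {p : ℝ} (hp₀ : 0 ≤ p) (hp₁ : p < 1) :
    ∫⁻ t in Icc (0 : ℝ) 1, (c / ‖t‖ₑ) ^ p = c ^ p * ENNReal.ofReal (1 / (1 - p)) := by
  have h_integrand : ∀ t ∈ Ioc (0 : ℝ) 1,
      (c / ‖t‖ₑ) ^ p = c ^ p * ENNReal.ofReal (t ^ (-p)) := fun t ht => by
    rw [ENNReal.div_rpow_of_nonneg _ _ hp₀, Real.enorm_of_nonneg ht.1.le, div_eq_mul_inv,
      ← ENNReal.rpow_neg, ENNReal.ofReal_rpow_of_pos ht.1]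
  rw [setLIntegral_congr Ioc_ae_eq_Icc.symm,
    setLIntegral_congr_fun measurableSet_Ioc h_integrand, lintegral_const_mul _ (by fun_prop),
    lintegral_Ioc_ofReal_rpow zero_le_one (by linarith), Real.one_rpow, neg_add_eq_sub]

lemma setLIntegral_segment_kappaG_rpow_le {n : ℕ} {e : EuclideanSpace ℝ (Fin n)} (he : ‖e‖ = 1)
    {X : Set (EuclideanSpace ℝ (Fin n))} (hX : X ⊆ (ℝ ∙ e : Set _) ∪ (ℝ ∙ e)ᗮ)
    {p : ℝ} (hp₀ : 0 ≤ p) (hp₁ : p < 1) :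
    ∫⁻ x in segment ℝ 0 e, kappaG X x ^ p ∂μH[1] ≤ 2 ^ p * ENNReal.ofReal (1 / (1 - p)) := by
  have h_segment : segment ℝ 0 e = LinearIsometry.toSpanSingleton ℝ _ he '' Icc 0 1 := by
    simp only [segment_eq_image', sub_zero, zero_add]
    rfl
  calc ∫⁻ x in segment ℝ 0 e, kappaG X x ^ p ∂μH[1]
      = ∫⁻ t in Icc (0 : ℝ) 1, kappaG X (t • e) ^ p := by
        rw [h_segment, setLIntegral_hausdorffMeasure_image_of_isometry
          (LinearIsometry.isometry _) zero_le_one, hausdorffMeasure_real]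
        rfl
    _ ≤ ∫⁻ t in Icc (0 : ℝ) 1, (2 / ‖t‖ₑ) ^ p :=
        lintegral_mono fun t => ENNReal.rpow_le_rpow (kappaG_smul_le_two_div_enorm he hX t) hp₀
    _ = 2 ^ p * ENNReal.ofReal (1 / (1 - p)) := lintegral_Icc_div_enorm_rpow 2 hp₀ hp₁

end Integration

section Eset

open EuclideanSpace (single)

lemma Eset_subset_union_segment :
    Eset ⊆ segment ℝ 0 (single 0 1) ∪ segment ℝ 0 (single 0 (-1)) ∪ segment ℝ 0 (single 1 1) := by
  simp only [segment_eq_image', sub_zero, zero_add]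
  rintro x (⟨h_vert, h_ge, h_le⟩ | ⟨h_horiz, h_mem⟩)
  · rcases le_total 0 (x 0) with h_nonneg | h_nonpos
    · refine .inl (.inl ⟨x 0, ⟨h_nonneg, h_le⟩, ?_⟩)
      ext k; fin_cases k <;> simp [h_vert]
    · refine .inl (.inr ⟨-x 0, ⟨by linarith, by linarith⟩, ?_⟩)
      ext k; fin_cases k <;> simp [h_vert]
  · refine .inr ⟨x 1, h_mem, ?_⟩
    ext k; fin_cases k <;> simp [h_horiz]

lemma Eset_subset_span_union_orthogonal (i : Fin 2) {a : ℝ} (ha : a ≠ 0) :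
    Eset ⊆ (ℝ ∙ (single i a : EuclideanSpace ℝ (Fin 2)) : Set _) ∪
      (ℝ ∙ (single i a : EuclideanSpace ℝ (Fin 2)))ᗮ := by
  intro x hx
  have h_axis : x 0 = 0 ∨ x 1 = 0 := hx.symm.imp And.left And.left
  have h_span {i j : Fin 2} (hij : j ≠ i) (hj : x j = 0) :
      x ∈ ℝ ∙ (single i a : EuclideanSpace ℝ (Fin 2)) := by
    refine Submodule.mem_span_singleton.mpr ⟨x i / a, ?_⟩
    ext k
    rcases eq_or_ne k i with rfl | hki
    · simp [ha]
    · obtain rfl : k = j := by omega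
      simp [hki, hj]
  have h_orthogonal {i : Fin 2} (hi : x i = 0) :
      x ∈ (ℝ ∙ (single i a : EuclideanSpace ℝ (Fin 2)))ᗮ :=
    Submodule.mem_orthogonal_singleton_iff_inner_right.mpr
      (by simp [EuclideanSpace.inner_single_left, hi])
  fin_cases i
  · exact h_axis.symm.imp (h_span one_ne_zero) h_orthogonal
  · exact h_axis.imp (h_span zero_ne_one) h_orthogonal

lemma energyU_Eset_le {p : ℝ} (hp₀ : 0 ≤ p) (hp₁ : p < 1) :
    energyU p 1 Eset ≤ 3 * (2 ^ p * ENNReal.ofReal (1 / (1 - p))) := by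
  have h_segment (i : Fin 2) {a : ℝ} (ha : |a| = 1) :
      ∫⁻ x in segment ℝ 0 (single i a), kappaG Eset x ^ p ∂μH[1]
        ≤ 2 ^ p * ENNReal.ofReal (1 / (1 - p)) :=
    setLIntegral_segment_kappaG_rpow_le (by simpa using ha)
      (Eset_subset_span_union_orthogonal i (abs_ne_zero.mp (by simp [ha]))) hp₀ hp₁
  calc energyU p 1 Eset
      ≤ ∫⁻ x in segment ℝ 0 (single 0 1) ∪ segment ℝ 0 (single 0 (-1)) ∪ segment ℝ 0 (single 1 1),
          kappaG Eset x ^ p ∂μH[1] := lintegral_mono_set Eset_subset_union_segment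
    _ ≤ 2 ^ p * ENNReal.ofReal (1 / (1 - p)) + 2 ^ p * ENNReal.ofReal (1 / (1 - p))
          + 2 ^ p * ENNReal.ofReal (1 / (1 - p)) := by
        grw [lintegral_union_le, lintegral_union_le, h_segment 0 (by simp), h_segment 0 (by simp),
          h_segment 1 (by simp)]
    _ = 3 * (2 ^ p * ENNReal.ofReal (1 / (1 - p))) := by ring

end Eset

theorem Eset_energyU_lt_top (p : ℝ) (hp : p ∈ Set.Ioo (0 : ℝ) 1) :
    energyU p 1 Eset ≤ ENNReal.ofReal (6 / (1 - p)) ∧ energyU p 1 Eset < ⊤ := by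
  have h_bound : energyU p 1 Eset ≤ ENNReal.ofReal (6 / (1 - p)) :=
    calc energyU p 1 Eset
        ≤ 3 * (2 ^ p * ENNReal.ofReal (1 / (1 - p))) := energyU_Eset_le hp.1.le hp.2
      _ ≤ 3 * (2 * ENNReal.ofReal (1 / (1 - p))) := by
        gcongr
        exact (ENNReal.rpow_le_rpow_of_exponent_le one_le_two hp.2.le).trans_eq (ENNReal.rpow_one 2)
      _ = ENNReal.ofReal (6 / (1 - p)) := by
        rw [← mul_assoc, div_eq_mul_one_div 6, ENNReal.ofReal_mul (by norm_num)]
        norm_num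
  exact ⟨h_bound, h_bound.trans_lt ENNReal.ofReal_lt_top⟩

end
end

section
/- Let E = ([−1,1]×{0}) ∪ ({0}×[0,1]) ⊂ ℝ². For every p ∈ (1,2) one has I_p^1(E) ≤ 9·2^{3p/2+1}·(2^{1−p}−1) / ((1−p)(2−p)); in particular I_p^1(E) < ∞. -/
open MeasureTheory Metric Set Filter
open scoped ENNReal Topology Classical

noncomputable section

/-!
On a union of lines through the origin, any two of which are orthogonal or equal, the inverse
circumradius satisfies `κ(x,y,z) ≤ 2√2 / (‖x‖ + ‖y‖)`. If `x ⟂ y`, this holds because the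
circumscribed circle has diameter at least `‖x - y‖ = √(‖x‖² + ‖y‖²)`. If `x` and `y` lie on one of
the lines and `z` on another, then `z` has distance at most `‖z‖` from the line through `x` and `y`,
while `‖x - z‖² ‖y - z‖² = (‖x‖² + ‖z‖²) (‖y‖² + ‖z‖²) ≥ ‖z‖² (‖x‖² + ‖y‖²)`. The bound depends on
`‖x‖` and `‖y‖` only, so on a star of `k` unit segments issuing from the origin the energy is at
most `k² ∫₀¹ ∫₀¹ (2√2 / (a + b))ᵖ da db`, and `E` is such a star with `k = 3`.
-/

section OrthogonalVectors

variable {E : Type*} [NormedAddCommGroup E] [InnerProductSpace ℝ E] {x y z : E}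

lemma norm_sub_sq_of_inner_eq_zero (h : inner ℝ x y = 0) :
    ‖x - y‖ ^ 2 = ‖x‖ ^ 2 + ‖y‖ ^ 2 := by
  rw [norm_sub_sq_real, h]
  ring

lemma norm_add_norm_le_sqrt_two_mul_norm_sub (h : inner ℝ x y = 0) :
    ‖x‖ + ‖y‖ ≤ √2 * ‖x - y‖ := by
  refine le_of_sq_le_sq ?_ (by positivity)
  rw [mul_pow, Real.sq_sqrt zero_le_two, norm_sub_sq_of_inner_eq_zero h]
  exact add_sq_le

lemma norm_mul_norm_add_norm_le_sqrt_two_mul (hxz : inner ℝ x z = 0) (hyz : inner ℝ y z = 0) :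
    ‖z‖ * (‖x‖ + ‖y‖) ≤ √2 * (‖x - z‖ * ‖y - z‖) := by
  refine le_of_sq_le_sq ?_ (by positivity)
  calc (‖z‖ * (‖x‖ + ‖y‖)) ^ 2
      = ‖z‖ ^ 2 * (‖x‖ + ‖y‖) ^ 2 := mul_pow ..
    _ ≤ ‖z‖ ^ 2 * (2 * (‖x‖ ^ 2 + ‖y‖ ^ 2)) := by gcongr; exact add_sq_le
    _ ≤ 2 * ((‖x‖ ^ 2 + ‖z‖ ^ 2) * (‖y‖ ^ 2 + ‖z‖ ^ 2)) := by
      nlinarith [sq_nonneg (‖x‖ * ‖y‖), sq_nonneg (‖z‖ ^ 2)]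
    _ = (√2 * (‖x - z‖ * ‖y - z‖)) ^ 2 := by
      rw [mul_pow, mul_pow, Real.sq_sqrt zero_le_two, norm_sub_sq_of_inner_eq_zero hxz,
        norm_sub_sq_of_inner_eq_zero hyz]

end OrthogonalVectors

section Curvature

variable {n : ℕ} {x y z : EuclideanSpace ℝ (Fin n)}

-- The left-hand side is twice the area of the triangle `xyz`, which is also `‖x - z‖ * ‖y - z‖`
-- times the sine of the angle at `z`.
lemma infDist_lineThrough_mul_norm_sub_le (x y z : EuclideanSpace ℝ (Fin n)) :
    infDist z (lineThrough x y) * ‖y - x‖ ≤ ‖x - z‖ * ‖y - z‖ := by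
  rcases eq_or_ne y x with rfl | hyx
  · simpa using mul_self_nonneg ‖y - z‖
  have hbase : ‖y - x‖ ≠ 0 := norm_ne_zero_iff.2 (sub_ne_zero.2 hyx)
  set t : ℝ := -inner ℝ (x - z) (y - x) / ‖y - x‖ ^ 2 with ht
  have hle_foot : infDist z (lineThrough x y) ≤ ‖x - z + t • (y - x)‖ := by
    have hfoot : x + t • (y - x) ∈ lineThrough x y := ⟨t, rfl⟩
    refine (infDist_le_dist_of_mem hfoot).trans_eq ?_
    rw [dist_comm, dist_eq_norm, add_sub_right_comm]
  have hgram : ‖x - z + t • (y - x)‖ ^ 2 * ‖y - x‖ ^ 2 =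
      ‖x - z‖ ^ 2 * ‖y - x‖ ^ 2 - inner ℝ (x - z) (y - x) ^ 2 := by
    rw [norm_add_sq_real, inner_smul_right, norm_smul, mul_pow, Real.norm_eq_abs, sq_abs, ht]
    field
  have hside : ‖y - z‖ ^ 2 = ‖x - z‖ ^ 2 + 2 * inner ℝ (x - z) (y - x) + ‖y - x‖ ^ 2 := by
    rw [← norm_add_sq_real, add_comm, sub_add_sub_cancel]
  refine (mul_le_mul_of_nonneg_right hle_foot (norm_nonneg _)).trans
    (le_of_sq_le_sq ?_ (by positivity))
  rw [mul_pow, mul_pow, hgram, hside]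
  nlinarith [sq_nonneg (‖x - z‖ ^ 2 + inner ℝ (x - z) (y - x))]

lemma smul_mem_lineThrough_smul {s t : ℝ} (hst : s ≠ t) (r : ℝ) (e : EuclideanSpace ℝ (Fin n)) :
    r • e ∈ lineThrough (s • e) (t • e) := by
  refine ⟨(r - s) / (t - s), ?_⟩
  rw [← sub_smul, smul_smul, div_mul_cancel₀ _ (sub_ne_zero.2 hst.symm), ← add_smul,
    add_sub_cancel]

lemma kappa_le_of_infDist_mul_le {a c : ℝ} (ha : 0 < a)
    (h : infDist z (lineThrough x y) * a ≤ c * (‖x - z‖ * ‖y - z‖)) :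
    kappa x y z ≤ ENNReal.ofReal (2 * c / a) := by
  unfold kappa
  split_ifs with hne
  · have hxz : 0 < ‖x - z‖ := norm_pos_iff.2 (sub_ne_zero.2 hne.2.2)
    have hyz : 0 < ‖y - z‖ := norm_pos_iff.2 (sub_ne_zero.2 hne.2.1)
    refine ENNReal.ofReal_le_ofReal ((div_le_div_iff₀ (by positivity) ha).2 ?_)
    linarith
  · exact zero_le

lemma kappa_self_left (x z : EuclideanSpace ℝ (Fin n)) : kappa x x z = 0 := by
  simp [kappa]

lemma kappa_le_of_inner_eq_zero (hxy : inner ℝ x y = 0) (z : EuclideanSpace ℝ (Fin n)) :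
    kappa x y z ≤ ENNReal.ofReal (2 * √2 / (‖x‖ + ‖y‖)) := by
  rcases eq_or_ne x y with rfl | hne
  · simp [kappa_self_left]
  have hpos : 0 < ‖x‖ + ‖y‖ := (norm_pos_iff.2 (sub_ne_zero.2 hne)).trans_le (norm_sub_le x y)
  refine kappa_le_of_infDist_mul_le hpos ?_
  calc infDist z (lineThrough x y) * (‖x‖ + ‖y‖)
      ≤ infDist z (lineThrough x y) * (√2 * ‖x - y‖) :=
        mul_le_mul_of_nonneg_left (norm_add_norm_le_sqrt_two_mul_norm_sub hxy) infDist_nonneg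
    _ = √2 * (infDist z (lineThrough x y) * ‖y - x‖) := by rw [norm_sub_rev x y]; ring
    _ ≤ √2 * (‖x - z‖ * ‖y - z‖) :=
        mul_le_mul_of_nonneg_left (infDist_lineThrough_mul_norm_sub_le x y z) (Real.sqrt_nonneg 2)

lemma kappa_smul_smul_le {e : EuclideanSpace ℝ (Fin n)}
    (hz : inner ℝ e z = 0 ∨ z ∈ Submodule.span ℝ {e}) (s t : ℝ) :
    kappa (s • e) (t • e) z ≤ ENNReal.ofReal (2 * √2 / (‖s • e‖ + ‖t • e‖)) := by
  rcases eq_or_ne (s • e) (t • e) with heq | hne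
  · simp [heq, kappa_self_left]
  have hst : s ≠ t := fun h => hne (congrArg (· • e) h)
  have hpos : 0 < ‖s • e‖ + ‖t • e‖ :=
    (norm_pos_iff.2 (sub_ne_zero.2 hne)).trans_le (norm_sub_le _ _)
  refine kappa_le_of_infDist_mul_le hpos ?_
  rcases hz with hez | hz
  · have hdist : infDist z (lineThrough (s • e) (t • e)) ≤ ‖z‖ := by
      simpa using infDist_le_dist_of_mem (x := z) (smul_mem_lineThrough_smul hst 0 e)
    refine (mul_le_mul_of_nonneg_right hdist hpos.le).trans
      (norm_mul_norm_add_norm_le_sqrt_two_mul ?_ ?_) <;>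
    rw [real_inner_smul_left, hez, mul_zero]
  · obtain ⟨r, rfl⟩ := Submodule.mem_span_singleton.1 hz
    rw [infDist_zero_of_mem (smul_mem_lineThrough_smul hst r e), zero_mul]
    positivity

end Curvature

section HausdorffIntegral

lemma setLIntegral_image_hausdorffMeasure_of_isometry {X Y : Type*} [EMetricSpace X]
    [CompleteSpace X] [MeasurableSpace X] [BorelSpace X] [EMetricSpace Y] [MeasurableSpace Y]
    [BorelSpace Y] {f : X → Y} (hf : Isometry f) {d : ℝ} (hd : 0 ≤ d) (g : Y → ℝ≥0∞) (s : Set X) :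
    ∫⁻ y in f '' s, g y ∂μH[d] = ∫⁻ x in s, g (f x) ∂μH[d] := by
  have hpres : MeasurePreserving f μH[d] (μH[d].restrict (range f)) :=
    ⟨hf.continuous.measurable, hf.map_hausdorffMeasure (Or.inl hd)⟩
  rw [hpres.setLIntegral_comp_emb hf.isClosedEmbedding.measurableEmbedding,
    Measure.restrict_restrict_of_subset (image_subset_range f s)]

lemma segment_zero_left_eq_image {E : Type*} [AddCommGroup E] [Module ℝ E] (e : E) :
    segment ℝ 0 e = (fun t : ℝ => t • e) '' Icc 0 1 := by
  simp [segment_eq_image]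

lemma setLIntegral_segment_norm {E : Type*} [NormedAddCommGroup E] [NormedSpace ℝ E]
    [MeasurableSpace E] [BorelSpace E] {e : E} (he : ‖e‖ = 1) (h : ℝ → ℝ≥0∞) :
    ∫⁻ x in segment ℝ 0 e, h ‖x‖ ∂μH[1] = ∫⁻ t in Ioc (0 : ℝ) 1, h t := by
  have hiso : Isometry fun t : ℝ => t • e := (LinearIsometry.toSpanSingleton ℝ E he).isometry
  rw [segment_zero_left_eq_image, setLIntegral_image_hausdorffMeasure_of_isometry hiso zero_le_one,
    hausdorffMeasure_real, setLIntegral_congr Ioc_ae_eq_Icc.symm]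
  refine setLIntegral_congr_fun measurableSet_Ioc fun t ht => ?_
  simp only [norm_smul, he, mul_one, Real.norm_of_nonneg ht.1.le]

end HausdorffIntegral

section SegmentStar

variable {ι E : Type*}

/-- The star with centre the origin and tips `u i`, that is, the union of the segments `[0, u i]`.
The set `E` is the star with tips `(1,0)`, `(-1,0)` and `(0,1)`. -/
def segmentStar [AddCommGroup E] [Module ℝ E] (u : ι → E) : Set E :=
  ⋃ i, segment ℝ 0 (u i)

lemma mem_segmentStar [AddCommGroup E] [Module ℝ E] {u : ι → E} {x : E} :
    x ∈ segmentStar u ↔ ∃ i, ∃ t ∈ Icc (0 : ℝ) 1, t • u i = x := by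
  simp only [segmentStar, segment_zero_left_eq_image, mem_iUnion, mem_image]

lemma isCompact_segmentStar [Finite ι] [AddCommGroup E] [Module ℝ E] [TopologicalSpace E]
    [ContinuousSMul ℝ E] (u : ι → E) : IsCompact (segmentStar u) :=
  isCompact_iUnion fun i => by
    rw [segment_zero_left_eq_image]
    exact isCompact_Icc.image (by fun_prop)

lemma setLIntegral_segmentStar_norm_le [Fintype ι] [NormedAddCommGroup E] [NormedSpace ℝ E]
    [MeasurableSpace E] [BorelSpace E] {u : ι → E} (hu : ∀ i, ‖u i‖ = 1) (h : ℝ → ℝ≥0∞) :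
    ∫⁻ x in segmentStar u, h ‖x‖ ∂μH[1] ≤ Fintype.card ι * ∫⁻ t in Ioc (0 : ℝ) 1, h t :=
  (lintegral_iUnion_le _ _).trans_eq <| by
    simp [setLIntegral_segment_norm (hu _), tsum_fintype]

end SegmentStar

section PowerIntegrals

variable {b p q : ℝ}

lemma setLIntegral_Ioc_ofReal_eq_ofReal_intervalIntegral {f : ℝ → ℝ} {a b : ℝ} (hab : a ≤ b)
    (hf : IntervalIntegrable f volume a b) (hf₀ : ∀ x ∈ Ioc a b, 0 ≤ f x) :
    ∫⁻ x in Ioc a b, ENNReal.ofReal (f x) = ENNReal.ofReal (∫ x in a..b, f x) := by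
  rw [intervalIntegral.integral_of_le hab,
    ofReal_integral_eq_lintegral_ofReal ((intervalIntegrable_iff_integrableOn_Ioc_of_le hab).1 hf)]
  exact ae_restrict_of_forall_mem measurableSet_Ioc hf₀

lemma intervalIntegrable_add_rpow (hb : 0 < b) (q : ℝ) :
    IntervalIntegrable (fun a : ℝ => (a + b) ^ q) volume 0 1 := by
  refine ContinuousOn.intervalIntegrable (ContinuousOn.rpow_const (by fun_prop) fun a ha => ?_)
  rw [uIcc_of_le zero_le_one] at ha
  exact Or.inl (add_pos_of_nonneg_of_pos ha.1 hb).ne'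

lemma integral_add_rpow_neg (hb : 0 < b) (hp : p ≠ 1) :
    ∫ a in (0 : ℝ)..1, (a + b) ^ (-p) = ((b + 1) ^ (1 - p) - b ^ (1 - p)) / (1 - p) := by
  have hzero : (0 : ℝ) ∉ uIcc b (b + 1) := by
    rw [uIcc_of_le (by linarith)]
    exact fun h => hb.not_ge h.1
  rw [intervalIntegral.integral_comp_add_right (fun t : ℝ => t ^ (-p)), zero_add, add_comm 1 b,
    integral_rpow (Or.inr ⟨by simpa using hp, hzero⟩), neg_add_eq_sub]

lemma integral_add_one_rpow_sub_rpow_div (hq₀ : q ≠ 0) (hq : -1 < q) :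
    ∫ b in (0 : ℝ)..1, ((b + 1) ^ q - b ^ q) / q = 2 * (2 ^ q - 1) / (q * (q + 1)) := by
  rw [intervalIntegral.integral_div,
    intervalIntegral.integral_sub (intervalIntegrable_add_rpow one_pos q)
      (intervalIntegral.intervalIntegrable_rpow' hq),
    intervalIntegral.integral_comp_add_right (fun t : ℝ => t ^ q), integral_rpow (Or.inl hq),
    integral_rpow (Or.inl hq), zero_add, one_add_one_eq_two, Real.rpow_add_one two_ne_zero,
    Real.one_rpow, Real.zero_rpow (by linarith)]
  have : q + 1 ≠ 0 := by linarith
  field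

lemma setLIntegral_ofReal_add_rpow_neg (hb : 0 < b) (hp : p ≠ 1) :
    ∫⁻ a in Ioc (0 : ℝ) 1, ENNReal.ofReal ((a + b) ^ (-p)) =
      ENNReal.ofReal (((b + 1) ^ (1 - p) - b ^ (1 - p)) / (1 - p)) := by
  rw [setLIntegral_Ioc_ofReal_eq_ofReal_intervalIntegral zero_le_one
    (intervalIntegrable_add_rpow hb _)
    fun a ha => Real.rpow_nonneg (add_pos ha.1 hb).le _, integral_add_rpow_neg hb hp]

lemma add_one_rpow_sub_rpow_div_nonneg (hb : 0 < b) (q : ℝ) : 0 ≤ ((b + 1) ^ q - b ^ q) / q := by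
  rcases le_total 0 q with hq | hq
  · exact div_nonneg (sub_nonneg.2 (Real.rpow_le_rpow hb.le (by linarith) hq)) hq
  · exact div_nonneg_of_nonpos
      (sub_nonpos.2 (Real.rpow_le_rpow_of_nonpos hb (by linarith) hq)) hq

lemma setLIntegral_setLIntegral_ofReal_add_rpow_neg (hp₁ : p ≠ 1) (hp₂ : p < 2) :
    ∫⁻ b in Ioc (0 : ℝ) 1, ∫⁻ a in Ioc (0 : ℝ) 1, ENNReal.ofReal ((a + b) ^ (-p)) =
      ENNReal.ofReal (2 * (2 ^ (1 - p) - 1) / ((1 - p) * (2 - p))) := by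
  have hq : -1 < 1 - p := by linarith
  calc ∫⁻ b in Ioc (0 : ℝ) 1, ∫⁻ a in Ioc (0 : ℝ) 1, ENNReal.ofReal ((a + b) ^ (-p))
      = ∫⁻ b in Ioc (0 : ℝ) 1, ENNReal.ofReal (((b + 1) ^ (1 - p) - b ^ (1 - p)) / (1 - p)) :=
        setLIntegral_congr_fun measurableSet_Ioc fun b hb =>
          setLIntegral_ofReal_add_rpow_neg hb.1 hp₁
    _ = ENNReal.ofReal (∫ b in (0 : ℝ)..1, ((b + 1) ^ (1 - p) - b ^ (1 - p)) / (1 - p)) :=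
        setLIntegral_Ioc_ofReal_eq_ofReal_intervalIntegral zero_le_one
          (((intervalIntegrable_add_rpow one_pos _).sub
            (intervalIntegral.intervalIntegrable_rpow' hq)).div_const _)
          fun b hb => add_one_rpow_sub_rpow_div_nonneg hb.1 _
    _ = ENNReal.ofReal (2 * (2 ^ (1 - p) - 1) / ((1 - p) * (2 - p))) := by
        rw [integral_add_one_rpow_sub_rpow_div (sub_ne_zero.2 hp₁.symm) hq,
          show 1 - p + 1 = 2 - p by ring]

lemma setLIntegral_setLIntegral_ofReal_div_add_rpow {c : ℝ} (hc : 0 < c) (hp₁ : p ≠ 1)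
    (hp₂ : p < 2) :
    ∫⁻ b in Ioc (0 : ℝ) 1, ∫⁻ a in Ioc (0 : ℝ) 1, ENNReal.ofReal (c / (a + b)) ^ p =
      ENNReal.ofReal (c ^ p * (2 * (2 ^ (1 - p) - 1) / ((1 - p) * (2 - p)))) := by
  have hpull : ∀ a ∈ Ioc (0 : ℝ) 1, ∀ b ∈ Ioc (0 : ℝ) 1, ENNReal.ofReal (c / (a + b)) ^ p =
      ENNReal.ofReal (c ^ p) * ENNReal.ofReal ((a + b) ^ (-p)) := fun a ha b hb => by
    have hab : 0 < a + b := add_pos ha.1 hb.1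
    rw [ENNReal.ofReal_rpow_of_pos (div_pos hc hab), ← ENNReal.ofReal_mul (by positivity),
      Real.div_rpow hc.le hab.le, Real.rpow_neg hab.le, div_eq_mul_inv]
  rw [ENNReal.ofReal_mul (by positivity), ← setLIntegral_setLIntegral_ofReal_add_rpow_neg hp₁ hp₂,
    ← lintegral_const_mul' _ _ ENNReal.ofReal_ne_top]
  refine setLIntegral_congr_fun measurableSet_Ioc fun b hb => ?_
  rw [← lintegral_const_mul' _ _ ENNReal.ofReal_ne_top]
  exact setLIntegral_congr_fun measurableSet_Ioc fun a ha => hpull a ha b hb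

lemma two_mul_sqrt_two_rpow (p : ℝ) : (2 * √2) ^ p = (2 : ℝ) ^ (3 * p / 2) := by
  have hbase : 2 * √2 = (2 : ℝ) ^ (3 / 2 : ℝ) := by
    rw [Real.sqrt_eq_rpow, ← Real.rpow_one_add' zero_le_two (by norm_num)]
    norm_num
  rw [hbase, ← Real.rpow_mul zero_le_two, div_mul_eq_mul_div]

end PowerIntegrals

section Energy

variable {n : ℕ} {ι : Type*} {u : ι → EuclideanSpace ℝ (Fin n)}

lemma kappaI_segmentStar_le (horth : ∀ i j, inner ℝ (u i) (u j) = 0 ∨ u j ∈ Submodule.span ℝ {u i})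
    {x y : EuclideanSpace ℝ (Fin n)} (hx : x ∈ segmentStar u) (hy : y ∈ segmentStar u) :
    kappaI (segmentStar u) x y ≤ ENNReal.ofReal (2 * √2 / (‖x‖ + ‖y‖)) := by
  refine iSup₂_le fun z hz => ?_
  obtain ⟨i, s, -, rfl⟩ := mem_segmentStar.1 hx
  obtain ⟨j, t, -, rfl⟩ := mem_segmentStar.1 hy
  obtain ⟨k, r, -, rfl⟩ := mem_segmentStar.1 hz
  rcases horth i j with hij | hij
  · exact kappa_le_of_inner_eq_zero (by simp [real_inner_smul_left, real_inner_smul_right, hij]) _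
  · obtain ⟨c, hc⟩ := Submodule.mem_span_singleton.1 hij
    rw [← hc, smul_smul]
    exact kappa_smul_smul_le ((horth i k).imp (by simp +contextual [real_inner_smul_right])
      (Submodule.smul_mem _ r)) _ _

lemma energyI_segmentStar_le_lintegral [Fintype ι] (hu : ∀ i, ‖u i‖ = 1)
    (horth : ∀ i j, inner ℝ (u i) (u j) = 0 ∨ u j ∈ Submodule.span ℝ {u i}) {p : ℝ} (hp : 0 ≤ p) :
    energyI p 1 (segmentStar u) ≤ Fintype.card ι ^ 2 *
      ∫⁻ b in Ioc (0 : ℝ) 1, ∫⁻ a in Ioc (0 : ℝ) 1, ENNReal.ofReal (2 * √2 / (a + b)) ^ p := by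
  have hmeas : MeasurableSet (segmentStar u) := (isCompact_segmentStar u).measurableSet
  set k : ℝ≥0∞ := (Fintype.card ι : ℝ≥0∞)
  set F : ℝ → ℝ → ℝ≥0∞ := fun a b => ENNReal.ofReal (2 * √2 / (a + b)) ^ p
  calc energyI p 1 (segmentStar u)
      ≤ ∫⁻ y in segmentStar u, ∫⁻ x in segmentStar u, F ‖x‖ ‖y‖ ∂μH[1] ∂μH[1] :=
        setLIntegral_mono' hmeas fun y hy => setLIntegral_mono' hmeas fun x hx =>
          ENNReal.rpow_le_rpow (kappaI_segmentStar_le horth hx hy) hp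
    _ ≤ ∫⁻ y in segmentStar u, (k * ∫⁻ a in Ioc (0 : ℝ) 1, F a ‖y‖) ∂μH[1] :=
        lintegral_mono fun y => setLIntegral_segmentStar_norm_le hu fun a => F a ‖y‖
    _ ≤ k * ∫⁻ b in Ioc (0 : ℝ) 1, k * ∫⁻ a in Ioc (0 : ℝ) 1, F a b :=
        setLIntegral_segmentStar_norm_le hu fun b => k * ∫⁻ a in Ioc (0 : ℝ) 1, F a b
    _ = k ^ 2 * ∫⁻ b in Ioc (0 : ℝ) 1, ∫⁻ a in Ioc (0 : ℝ) 1, F a b := by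
        rw [lintegral_const_mul' _ _ (ENNReal.natCast_ne_top _), ← mul_assoc, sq]

theorem Eset_energyI_lt_top_general [Fintype ι] (hu : ∀ i, ‖u i‖ = 1)
    (horth : ∀ i j, inner ℝ (u i) (u j) = 0 ∨ u j ∈ Submodule.span ℝ {u i})
    {p : ℝ} (hp₀ : 0 ≤ p) (hp₁ : p ≠ 1) (hp₂ : p < 2) :
    energyI p 1 (segmentStar u) ≤
      ENNReal.ofReal (Fintype.card ι ^ 2 * 2 ^ (3 * p / 2 + 1) * (2 ^ (1 - p) - 1) /
        ((1 - p) * (2 - p))) ∧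
    energyI p 1 (segmentStar u) < ⊤ := by
  have hbound := energyI_segmentStar_le_lintegral hu horth hp₀
  rw [setLIntegral_setLIntegral_ofReal_div_add_rpow (by positivity) hp₁ hp₂,
    ← ENNReal.ofReal_natCast, ← ENNReal.ofReal_pow (by positivity),
    ← ENNReal.ofReal_mul (by positivity), two_mul_sqrt_two_rpow] at hbound
  refine ⟨hbound.trans_eq (congrArg ENNReal.ofReal ?_), hbound.trans_lt ENNReal.ofReal_lt_top⟩
  rw [Real.rpow_add_one two_ne_zero]
  ring

end Energy

section TShape

/-- The tips `(1,0)`, `(-1,0)`, `(0,1)` of the T-shaped set `E`. -/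
def EsetTip : Fin 3 → EuclideanSpace ℝ (Fin 2) :=
  ![!₂[1, 0], !₂[-1, 0], !₂[0, 1]]

lemma norm_EsetTip (i : Fin 3) : ‖EsetTip i‖ = 1 := by
  fin_cases i <;> simp [EsetTip, EuclideanSpace.norm_eq]

lemma inner_EsetTip_eq_zero_or_mem_span (i j : Fin 3) :
    inner ℝ (EsetTip i) (EsetTip j) = 0 ∨ EsetTip j ∈ Submodule.span ℝ {EsetTip i} := by
  have hneg : EsetTip 1 = -EsetTip 0 := by ext k; fin_cases k <;> simp [EsetTip]
  have h02 : inner ℝ (EsetTip 0) (EsetTip 2) = 0 := by simp [EsetTip, PiLp.inner_apply]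
  have hspan : Submodule.span ℝ {-EsetTip 0} = Submodule.span ℝ {EsetTip 0} := by
    rw [← Set.neg_singleton, Submodule.span_neg]
  fin_cases i <;> fin_cases j <;>
    simp [hneg, h02, hspan, real_inner_comm (EsetTip 0) (EsetTip 2),
      Submodule.mem_span_singleton_self]

lemma Eset_eq_segmentStar : Eset = segmentStar EsetTip := by
  ext x
  have hstar : x ∈ segmentStar EsetTip ↔ x 1 = 0 ∧ x 0 ∈ Icc 0 1 ∨
      x 1 = 0 ∧ -x 0 ∈ Icc 0 1 ∨ x 0 = 0 ∧ x 1 ∈ Icc 0 1 := by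
    simp [mem_segmentStar, PiLp.ext_iff, Fin.exists_fin_succ, EsetTip, neg_eq_iff_eq_neg,
      eq_comm (a := (0 : ℝ)), and_comm]
  rw [hstar]
  simp only [Eset, mem_union, mem_ofPred_eq, mem_Icc]
  grind

end TShape

theorem Eset_energyI_lt_top (p : ℝ) (hp : p ∈ Set.Ioo (1 : ℝ) 2) :
    energyI p 1 Eset ≤
      ENNReal.ofReal (9 * 2 ^ (3 * p / 2 + 1) * (2 ^ (1 - p) - 1) / ((1 - p) * (2 - p))) ∧
    energyI p 1 Eset < ⊤ := by
  have hcard : (9 : ℝ) = (Fintype.card (Fin 3) : ℝ) ^ 2 := by norm_num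
  rw [Eset_eq_segmentStar, hcard]
  exact Eset_energyI_lt_top_general norm_EsetTip inner_EsetTip_eq_zero_or_mem_span
    (zero_le_one.trans hp.1.le) hp.1.ne' hp.2

end
end

section
/- Let E = ([−1,1]×{0}) ∪ ({0}×[0,1]) ⊂ ℝ². For every p ∈ [2,3) one has M_p^1(E) ≤ 72π/(3−p)²; in particular M_p^1(E) < ∞. -/
open MeasureTheory Metric Set Filter
open scoped ENNReal Topology Classical

noncomputable section

/-!
The curvature `κ(x, y, z)` equals `2 √G / (‖x - y‖ ‖y - z‖ ‖x - z‖)`, where `G` is the Gram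
determinant of `x - z` and `y - z`; it is therefore symmetric and measurable. Hence, by Tonelli, the
energy of a union of two pieces `X` and `Y` is at most
`M(X,X,X) + 3 M(X,X,Y) + 3 M(Y,Y,X) + M(Y,Y,Y)`, and the outer terms vanish when both pieces are
straight.

For orthonormal `u`, `v` one has `κ(au, bu, cv) = (2 / |c|) √(w a) √(w b)` with
`w a = 1 / (1 + (a / c)²) ≤ 1`, so that `κ ^ p ≤ (2 / |c|) ^ p w(a) w(b)` for `p ≥ 2`. The integral
of `w` over a line is `π |c|` and over a half-line from the origin half of that, which leaves a
multiple of `∫ |c| ^ (2 - p) dc`, finite exactly for `p < 3`.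
-/

section ParallelogramArea

variable {E : Type*} [NormedAddCommGroup E] [InnerProductSpace ℝ E]

/-- The squared area of the parallelogram spanned by `x - z` and `y - z`, that is, their Gram
determinant. It is symmetric in the three points and expresses `kappa` as a closed formula. -/
def parallelogramAreaSq (x y z : E) : ℝ :=
  ‖x - z‖ ^ 2 * ‖y - z‖ ^ 2 - inner ℝ (x - z) (y - z) ^ 2

lemma parallelogramAreaSq_swap_left (x y z : E) :
    parallelogramAreaSq x y z = parallelogramAreaSq y x z := by
  rw [parallelogramAreaSq, parallelogramAreaSq, real_inner_comm, mul_comm]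

lemma parallelogramAreaSq_swap_right (x y z : E) :
    parallelogramAreaSq x y z = parallelogramAreaSq x z y := by
  have hxy : x - y = (x - z) - (y - z) := by abel
  rw [parallelogramAreaSq, parallelogramAreaSq, hxy, ← neg_sub y z, norm_neg, inner_neg_right,
    norm_sub_sq_real (x - z), inner_sub_left (x - z), real_inner_self_eq_norm_sq]
  ring

lemma norm_sub_add_smul_sq_mul_norm_sub_sq (x y z : E) (t : ℝ) :
    ‖z - (x + t • (y - x))‖ ^ 2 * ‖x - y‖ ^ 2 =
      parallelogramAreaSq x y z + (inner ℝ (z - x) (y - x) - t * ‖x - y‖ ^ 2) ^ 2 := by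
  rw [parallelogramAreaSq_swap_left, parallelogramAreaSq_swap_right, parallelogramAreaSq_swap_left,
    parallelogramAreaSq, norm_sub_rev x y, ← sub_sub, norm_sub_sq_real, inner_smul_right, norm_smul,
    mul_pow, Real.norm_eq_abs, sq_abs]
  ring

lemma parallelogramAreaSq_smul_smul_smul_self (u : E) (a b c : ℝ) :
    parallelogramAreaSq (a • u) (b • u) (c • u) = 0 := by
  simp only [parallelogramAreaSq, ← sub_smul, norm_smul, inner_smul_left, inner_smul_right,
    real_inner_self_eq_norm_sq, mul_pow, Real.norm_eq_abs, sq_abs, conj_trivial]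
  ring

variable {u v : E} (hu : ‖u‖ = 1) (hv : ‖v‖ = 1) (huv : inner ℝ u v = 0)
include hu hv huv

lemma inner_smul_sub_smul_of_orthonormal (a b c : ℝ) :
    inner ℝ (a • u - c • v) (b • u - c • v) = a * b + c ^ 2 := by
  simp only [inner_sub_left, inner_sub_right, inner_smul_left, inner_smul_right, conj_trivial,
    real_inner_self_eq_norm_sq, real_inner_comm u v, huv, hu, hv]
  ring

lemma norm_smul_sub_smul_sq_of_orthonormal (a c : ℝ) :
    ‖a • u - c • v‖ ^ 2 = a ^ 2 + c ^ 2 := by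
  rw [← real_inner_self_eq_norm_sq, inner_smul_sub_smul_of_orthonormal hu hv huv, pow_two a]

lemma norm_smul_sub_smul_of_orthonormal {c : ℝ} (hc : c ≠ 0) (a : ℝ) :
    ‖a • u - c • v‖ = |c| * √(1 + (a / c) ^ 2) := by
  rw [← Real.sqrt_sq (norm_nonneg (a • u - c • v)), ← Real.sqrt_sq_eq_abs,
    ← Real.sqrt_mul (sq_nonneg c), norm_smul_sub_smul_sq_of_orthonormal hu hv huv]
  congr 1
  field_simp
  ring

lemma parallelogramAreaSq_smul_smul_smul (a b c : ℝ) :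
    parallelogramAreaSq (a • u) (b • u) (c • v) = ((a - b) * c) ^ 2 := by
  rw [parallelogramAreaSq, norm_smul_sub_smul_sq_of_orthonormal hu hv huv,
    norm_smul_sub_smul_sq_of_orthonormal hu hv huv, inner_smul_sub_smul_of_orthonormal hu hv huv]
  ring

end ParallelogramArea

section Kappa

variable {n : ℕ}

lemma infDist_lineThrough_mul_norm_sub {x y : EuclideanSpace ℝ (Fin n)} (hxy : x ≠ y)
    (z : EuclideanSpace ℝ (Fin n)) :
    infDist z (lineThrough x y) * ‖x - y‖ = √(parallelogramAreaSq x y z) := by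
  have hpos : 0 < ‖x - y‖ := norm_sub_pos_iff.2 hxy
  have hmem (t : ℝ) : x + t • (y - x) ∈ lineThrough x y := ⟨t, rfl⟩
  apply le_antisymm
  · set t := inner ℝ (z - x) (y - x) / ‖x - y‖ ^ 2 with ht
    have hfoot := norm_sub_add_smul_sq_mul_norm_sub_sq x y z t
    rw [ht, div_mul_cancel₀ _ (by positivity), sub_self, zero_pow two_ne_zero, add_zero, ← ht,
      ← mul_pow] at hfoot
    rw [← hfoot, Real.sqrt_sq (by positivity), ← dist_eq_norm z]
    gcongr
    exact infDist_le_dist_of_mem (hmem t)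
  · rw [← div_le_iff₀ hpos, le_infDist ⟨_, hmem 0⟩]
    rintro _ ⟨t, rfl⟩
    rw [div_le_iff₀ hpos, dist_eq_norm]
    refine Real.sqrt_le_iff.2 ⟨by positivity, ?_⟩
    rw [mul_pow, norm_sub_add_smul_sq_mul_norm_sub_sq]
    exact le_add_of_nonneg_right (sq_nonneg _)

-- For triples that are not pairwise distinct the right-hand side is `x / 0 = 0`.
lemma kappa_eq (x y z : EuclideanSpace ℝ (Fin n)) :
    kappa x y z = ENNReal.ofReal
      (2 * √(parallelogramAreaSq x y z) / (‖x - y‖ * ‖y - z‖ * ‖x - z‖)) := by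
  unfold kappa
  split_ifs with hdistinct
  · have hpos : 0 < ‖x - y‖ := norm_sub_pos_iff.2 hdistinct.1
    rw [← infDist_lineThrough_mul_norm_sub hdistinct.1 z]
    congr 1
    field_simp
  · have hzero : ‖x - y‖ * ‖y - z‖ * ‖x - z‖ = 0 := by
      simp only [mul_eq_zero, norm_eq_zero, sub_eq_zero]
      tauto
    rw [hzero, div_zero, ENNReal.ofReal_zero]

lemma kappa_swap_left (x y z : EuclideanSpace ℝ (Fin n)) : kappa x y z = kappa y x z := by
  rw [kappa_eq, kappa_eq, parallelogramAreaSq_swap_left, norm_sub_rev x y, mul_right_comm]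

lemma kappa_swap_right (x y z : EuclideanSpace ℝ (Fin n)) : kappa x y z = kappa x z y := by
  rw [kappa_eq, kappa_eq, parallelogramAreaSq_swap_right, norm_sub_rev y z]
  congr 2
  ring

lemma measurable_kappa : Measurable
    fun q : EuclideanSpace ℝ (Fin n) × EuclideanSpace ℝ (Fin n) × EuclideanSpace ℝ (Fin n) ↦
      kappa q.1 q.2.1 q.2.2 := by
  simp only [kappa_eq, parallelogramAreaSq]
  fun_prop

lemma kappa_smul_smul_smul_self (u : EuclideanSpace ℝ (Fin n)) (a b c : ℝ) :
    kappa (a • u) (b • u) (c • u) = 0 := by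
  rw [kappa_eq, parallelogramAreaSq_smul_smul_smul_self, Real.sqrt_zero, mul_zero, zero_div,
    ENNReal.ofReal_zero]

variable {u v : EuclideanSpace ℝ (Fin n)} (hu : ‖u‖ = 1) (hv : ‖v‖ = 1) (huv : inner ℝ u v = 0)
include hu hv huv

lemma kappa_smul_smul_smul {a b c : ℝ} (hab : a ≠ b) (hc : c ≠ 0) :
    kappa (a • u) (b • u) (c • v) =
      ENNReal.ofReal (2 / |c| * √(1 + (a / c) ^ 2)⁻¹ * √(1 + (b / c) ^ 2)⁻¹) := by
  rw [kappa_eq, parallelogramAreaSq_smul_smul_smul hu hv huv, Real.sqrt_sq_eq_abs, abs_mul,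
    norm_smul_sub_smul_of_orthonormal hu hv huv hc, norm_smul_sub_smul_of_orthonormal hu hv huv hc,
    ← sub_smul, norm_smul, hu, mul_one, Real.norm_eq_abs, Real.sqrt_inv, Real.sqrt_inv]
  congr 1
  field_simp [sub_ne_zero.2 hab]

end Kappa

lemma sqrt_rpow_le_self {x p : ℝ} (hx₀ : 0 ≤ x) (hx₁ : x ≤ 1) (hp : 2 ≤ p) : √x ^ p ≤ x := by
  have hsqrt : √x ≤ 1 := Real.sqrt_le_one.2 hx₁
  calc √x ^ p ≤ √x ^ (2 : ℝ) :=
        Real.rpow_le_rpow_of_exponent_ge' (Real.sqrt_nonneg x) hsqrt zero_le_two hp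
    _ = x := by rw [Real.rpow_two, Real.sq_sqrt hx₀]

lemma inv_one_add_sq_le_one (x : ℝ) : (1 + x ^ 2)⁻¹ ≤ 1 :=
  inv_le_one_of_one_le₀ (le_add_of_nonneg_right (sq_nonneg x))

lemma kappa_smul_smul_smul_rpow_le {n : ℕ} {u v : EuclideanSpace ℝ (Fin n)} (hu : ‖u‖ = 1)
    (hv : ‖v‖ = 1) (huv : inner ℝ u v = 0) {p : ℝ} (hp : 2 ≤ p) (a b c : ℝ) :
    kappa (a • u) (b • u) (c • v) ^ p ≤
      ENNReal.ofReal ((2 / |c|) ^ p) * ENNReal.ofReal (1 + (a / c) ^ 2)⁻¹ *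
        ENNReal.ofReal (1 + (b / c) ^ 2)⁻¹ := by
  have hp₀ : 0 < p := by linarith
  rcases eq_or_ne a b with rfl | hab
  · simp [kappa, hp₀]
  rcases eq_or_ne c 0 with rfl | hc
  · have hzero := kappa_smul_smul_smul_self u a b 0
    rw [zero_smul] at hzero ⊢
    rw [hzero, ENNReal.zero_rpow_of_pos hp₀]
    exact zero_le
  · rw [kappa_smul_smul_smul hu hv huv hab hc, ENNReal.ofReal_rpow_of_nonneg (by positivity) hp₀.le,
      Real.mul_rpow (by positivity) (by positivity), Real.mul_rpow (by positivity) (by positivity),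
      ← ENNReal.ofReal_mul (by positivity), ← ENNReal.ofReal_mul (by positivity)]
    gcongr <;> exact sqrt_rpow_le_self (by positivity) (inv_one_add_sq_le_one _) hp

section MengerEnergy

variable {n : ℕ} (p : ℝ)

/-- The integral Menger curvature with a separate measure for each vertex of the triangle, so that
the energy of a union can be expanded multilinearly. -/
def mengerEnergy (μ ν ρ : Measure (EuclideanSpace ℝ (Fin n))) : ℝ≥0∞ :=
  ∫⁻ z, ∫⁻ y, ∫⁻ x, kappa x y z ^ p ∂μ ∂ν ∂ρ

variable (μ ν ρ : Measure (EuclideanSpace ℝ (Fin n)))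

lemma mengerEnergy_add_right (ρ' : Measure (EuclideanSpace ℝ (Fin n))) :
    mengerEnergy p μ ν (ρ + ρ') = mengerEnergy p μ ν ρ + mengerEnergy p μ ν ρ' :=
  lintegral_add_measure _ _ _

lemma mengerEnergy_swap_left [SFinite μ] [SFinite ν] :
    mengerEnergy p μ ν ρ = mengerEnergy p ν μ ρ := by
  refine lintegral_congr fun z ↦ ?_
  have hmeas : Measurable fun q : EuclideanSpace ℝ (Fin n) × EuclideanSpace ℝ (Fin n) ↦
      kappa q.2 q.1 z ^ p :=
    (measurable_kappa.comp (by fun_prop :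
      Measurable fun q : EuclideanSpace ℝ (Fin n) × EuclideanSpace ℝ (Fin n) ↦
        (q.2, q.1, z))).pow_const p
  rw [lintegral_lintegral_swap hmeas.aemeasurable]
  simp only [kappa_swap_left]

lemma mengerEnergy_swap_right [SFinite μ] [SFinite ν] [SFinite ρ] :
    mengerEnergy p μ ν ρ = mengerEnergy p μ ρ ν := by
  have hmeas : Measurable fun q : EuclideanSpace ℝ (Fin n) × EuclideanSpace ℝ (Fin n) ↦
      ∫⁻ x, kappa x q.2 q.1 ^ p ∂μ :=
    ((measurable_kappa.comp (by fun_prop :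
      Measurable fun q : (EuclideanSpace ℝ (Fin n) × EuclideanSpace ℝ (Fin n)) ×
        EuclideanSpace ℝ (Fin n) ↦ (q.2, q.1.2, q.1.1))).pow_const p).lintegral_prod_right'
  rw [mengerEnergy, lintegral_lintegral_swap hmeas.aemeasurable]
  simp only [mengerEnergy, kappa_swap_right]

lemma mengerEnergy_add_self [SFinite μ] [SFinite ν] :
    mengerEnergy p (μ + ν) (μ + ν) (μ + ν) =
      mengerEnergy p μ μ μ + 3 * mengerEnergy p μ μ ν + 3 * mengerEnergy p ν ν μ +
        mengerEnergy p ν ν ν := by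
  have hadd_middle (σ τ : Measure (EuclideanSpace ℝ (Fin n))) [SFinite σ] [SFinite τ] :
      mengerEnergy p σ (μ + ν) τ = mengerEnergy p σ μ τ + mengerEnergy p σ ν τ := by
    simp only [mengerEnergy_swap_right p σ _ τ, mengerEnergy_add_right]
  have hadd_left (σ τ : Measure (EuclideanSpace ℝ (Fin n))) [SFinite σ] [SFinite τ] :
      mengerEnergy p (μ + ν) σ τ = mengerEnergy p μ σ τ + mengerEnergy p ν σ τ := by
    simp only [mengerEnergy_swap_left p _ σ τ, hadd_middle]
  rw [mengerEnergy_add_right, hadd_middle, hadd_middle, hadd_left, hadd_left, hadd_left, hadd_left,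
    mengerEnergy_swap_left p ν μ μ, mengerEnergy_swap_right p μ ν μ,
    mengerEnergy_swap_left p μ ν ν, mengerEnergy_swap_right p ν μ ν]
  ring

lemma energyM_union_le (α : ℝ) (X Y : Set (EuclideanSpace ℝ (Fin n)))
    [SFinite (μH[α].restrict X)] [SFinite (μH[α].restrict Y)] :
    energyM p α (X ∪ Y) ≤
      mengerEnergy p (μH[α].restrict X) (μH[α].restrict X) (μH[α].restrict X) +
      3 * mengerEnergy p (μH[α].restrict X) (μH[α].restrict X) (μH[α].restrict Y) +
      3 * mengerEnergy p (μH[α].restrict Y) (μH[α].restrict Y) (μH[α].restrict X) +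
      mengerEnergy p (μH[α].restrict Y) (μH[α].restrict Y) (μH[α].restrict Y) := by
  have hle := Measure.restrict_union_le (μ := μH[α]) X Y
  rw [← mengerEnergy_add_self]
  exact lintegral_mono' hle fun _ ↦ lintegral_mono' hle fun _ ↦ lintegral_mono' hle le_rfl

end MengerEnergy

section Lines

lemma hausdorffMeasure_restrict_image_of_isometry {X : Type*} [MetricSpace X] [MeasurableSpace X]
    [BorelSpace X] {g : ℝ → X} (hg : Isometry g) (s : Set ℝ) :
    (μH[1] : Measure X).restrict (g '' s) = (volume.restrict s).map g := by
  have hemb : MeasurableEmbedding g := hg.isClosedEmbedding.measurableEmbedding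
  have hmap : (volume : Measure ℝ).map g = μH[1].restrict (range g) := by
    rw [← hausdorffMeasure_real, hg.map_hausdorffMeasure (Or.inl zero_le_one)]
  rw [← preimage_image_eq s hemb.injective, ← hemb.restrict_map, hmap,
    Measure.restrict_restrict_of_subset (image_subset_range _ _),
    preimage_image_eq s hemb.injective]

lemma isometry_smul_right_of_norm_eq_one {E : Type*} [NormedAddCommGroup E] [NormedSpace ℝ E]
    {u : E} (hu : ‖u‖ = 1) : Isometry fun t : ℝ ↦ t • u :=
  (LinearIsometry.toSpanSingleton ℝ E hu).isometry

variable {n : ℕ} {p : ℝ} {u v : EuclideanSpace ℝ (Fin n)}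

lemma mengerEnergy_map_smul (hu : ‖u‖ = 1) (hv : ‖v‖ = 1) (p : ℝ) (μ ν : Measure ℝ) :
    mengerEnergy p (μ.map (· • u)) (μ.map (· • u)) (ν.map (· • v)) =
      ∫⁻ c, ∫⁻ b, ∫⁻ a, kappa (a • u) (b • u) (c • v) ^ p ∂μ ∂μ ∂ν := by
  have hembed {w : EuclideanSpace ℝ (Fin n)} (hw : ‖w‖ = 1) :
      MeasurableEmbedding fun t : ℝ ↦ t • w :=
    (isometry_smul_right_of_norm_eq_one hw).isClosedEmbedding.measurableEmbedding
  simp only [mengerEnergy, (hembed hu).lintegral_map, (hembed hv).lintegral_map]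

lemma mengerEnergy_map_smul_self (hu : ‖u‖ = 1) (hp : 0 < p) (μ : Measure ℝ) :
    mengerEnergy p (μ.map (· • u)) (μ.map (· • u)) (μ.map (· • u)) = 0 := by
  rw [mengerEnergy_map_smul hu hu]
  simp only [kappa_smul_smul_smul_self, ENNReal.zero_rpow_of_pos hp, lintegral_zero]

lemma lintegral_kappa_smul_smul_smul_rpow_le (hu : ‖u‖ = 1) (hv : ‖v‖ = 1) (huv : inner ℝ u v = 0)
    (hp : 2 ≤ p) (μ : Measure ℝ) (c : ℝ) :
    ∫⁻ b, ∫⁻ a, kappa (a • u) (b • u) (c • v) ^ p ∂μ ∂μ ≤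
      ENNReal.ofReal ((2 / |c|) ^ p) * (∫⁻ a, ENNReal.ofReal (1 + (a / c) ^ 2)⁻¹ ∂μ) ^ 2 := by
  have hmeas : Measurable fun a : ℝ ↦ ENNReal.ofReal (1 + (a / c) ^ 2)⁻¹ := by fun_prop
  calc _ ≤ ∫⁻ b, ∫⁻ a, ENNReal.ofReal ((2 / |c|) ^ p) * ENNReal.ofReal (1 + (a / c) ^ 2)⁻¹ *
          ENNReal.ofReal (1 + (b / c) ^ 2)⁻¹ ∂μ ∂μ :=
        lintegral_mono fun b ↦ lintegral_mono fun a ↦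
          kappa_smul_smul_smul_rpow_le hu hv huv hp a b c
    _ = _ := by
        simp only [lintegral_mul_const _ (hmeas.const_mul _), lintegral_const_mul _ hmeas]
        rw [pow_two, mul_assoc]

lemma mengerEnergy_map_smul_le (hu : ‖u‖ = 1) (hv : ‖v‖ = 1) (huv : inner ℝ u v = 0)
    (hp : 2 ≤ p) {μ : Measure ℝ} {M : ℝ} (hM : 0 ≤ M)
    (hμ : ∀ c ≠ 0, ∫⁻ a, ENNReal.ofReal (1 + (a / c) ^ 2)⁻¹ ∂μ ≤ ENNReal.ofReal (M * |c|))
    (ν : Measure ℝ) :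
    mengerEnergy p (μ.map (· • u)) (μ.map (· • u)) (ν.map (· • v)) ≤
      ENNReal.ofReal (2 ^ p * M ^ 2) * ∫⁻ c, ENNReal.ofReal (|c| ^ (2 - p)) ∂ν := by
  rw [mengerEnergy_map_smul hu hv, ← lintegral_const_mul _ (by fun_prop)]
  refine lintegral_mono fun c ↦
    (lintegral_kappa_smul_smul_smul_rpow_le hu hv huv hp μ c).trans ?_
  rcases eq_or_ne c 0 with rfl | hc
  · simp [Real.zero_rpow (by linarith : p ≠ 0)]
  have hc_pos : 0 < |c| := abs_pos.2 hc
  grw [hμ c hc]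
  rw [← ENNReal.ofReal_pow (by positivity), ← ENNReal.ofReal_mul (by positivity),
    ← ENNReal.ofReal_mul (by positivity), Real.div_rpow zero_le_two hc_pos.le,
    Real.rpow_sub hc_pos, Real.rpow_two]
  apply le_of_eq
  congr 1
  ring

end Lines

section Integrals

lemma mul_arctan_le (c x : ℝ) : c * Real.arctan x ≤ Real.pi / 2 * |c| := by
  have harctan : |Real.arctan x| ≤ Real.pi / 2 :=
    abs_le.2 ⟨(Real.neg_pi_div_two_lt_arctan x).le, (Real.arctan_lt_pi_div_two x).le⟩
  calc c * Real.arctan x ≤ |Real.arctan x| * |c| := by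
        rw [← abs_mul, mul_comm]
        exact le_abs_self _
    _ ≤ _ := by gcongr

lemma lintegral_Icc_inv_one_add_div_sq {l r c : ℝ} (hlr : l ≤ r) (hc : c ≠ 0) :
    ∫⁻ a in Icc l r, ENNReal.ofReal (1 + (a / c) ^ 2)⁻¹ =
      ENNReal.ofReal (c * Real.arctan (r / c) - c * Real.arctan (l / c)) := by
  have hcont : Continuous fun a : ℝ ↦ (1 + (a / c) ^ 2)⁻¹ :=
    Continuous.inv₀ (by fun_prop) fun a ↦ by positivity
  rw [← ofReal_integral_eq_lintegral_ofReal hcont.integrableOn_Icc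
      (Eventually.of_forall fun a ↦ by positivity), integral_Icc_eq_integral_Ioc,
    ← intervalIntegral.integral_of_le hlr,
    intervalIntegral.integral_comp_div (fun x ↦ (1 + x ^ 2)⁻¹) hc, integral_inv_one_add_sq,
    smul_eq_mul, mul_sub]

lemma lintegral_Icc_inv_one_add_div_sq_le {l r c : ℝ} (hlr : l ≤ r) (hc : c ≠ 0) :
    ∫⁻ a in Icc l r, ENNReal.ofReal (1 + (a / c) ^ 2)⁻¹ ≤ ENNReal.ofReal (Real.pi * |c|) := by
  rw [lintegral_Icc_inv_one_add_div_sq hlr hc]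
  apply ENNReal.ofReal_le_ofReal
  have hleft := mul_arctan_le (-c) (l / c)
  rw [abs_neg] at hleft
  linarith [mul_arctan_le c (r / c)]

lemma lintegral_Icc_zero_inv_one_add_div_sq_le {r c : ℝ} (hr : 0 ≤ r) (hc : c ≠ 0) :
    ∫⁻ a in Icc 0 r, ENNReal.ofReal (1 + (a / c) ^ 2)⁻¹ ≤ ENNReal.ofReal (Real.pi / 2 * |c|) := by
  rw [lintegral_Icc_inv_one_add_div_sq hr hc, zero_div, Real.arctan_zero, mul_zero, sub_zero]
  exact ENNReal.ofReal_le_ofReal (mul_arctan_le c (r / c))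

lemma lintegral_Icc_zero_abs_rpow {s r : ℝ} (hs : -1 < s) (hr : 0 ≤ r) :
    ∫⁻ c in Icc 0 r, ENNReal.ofReal (|c| ^ s) = ENNReal.ofReal (r ^ (s + 1) / (s + 1)) := by
  have habs : EqOn (fun c : ℝ ↦ ENNReal.ofReal (|c| ^ s)) (fun c ↦ ENNReal.ofReal (c ^ s))
      (Icc 0 r) := fun c hc ↦ by simp only [abs_of_nonneg hc.1]
  have hint : IntegrableOn (fun c : ℝ ↦ c ^ s) (Icc 0 r) :=
    (intervalIntegrable_iff_integrableOn_Icc_of_le hr).1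
      (intervalIntegral.intervalIntegrable_rpow' hs)
  have hnonneg : ∀ᵐ c ∂volume.restrict (Icc 0 r), 0 ≤ c ^ s :=
    (ae_restrict_mem measurableSet_Icc).mono fun c hc ↦ Real.rpow_nonneg hc.1 s
  rw [setLIntegral_congr_fun measurableSet_Icc habs,
    ← ofReal_integral_eq_lintegral_ofReal hint hnonneg, integral_Icc_eq_integral_Ioc,
    ← intervalIntegral.integral_of_le hr, integral_rpow (Or.inl hs),
    Real.zero_rpow (by linarith), sub_zero]

lemma lintegral_Icc_neg_zero_of_even {f : ℝ → ℝ≥0∞} (hf : f.Even) (r : ℝ) :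
    ∫⁻ c in Icc (-r) 0, f c = ∫⁻ c in Icc 0 r, f c := by
  have hneg := (Measure.measurePreserving_neg (volume : Measure ℝ)).setLIntegral_comp_preimage_emb
    (MeasurableEquiv.neg ℝ).measurableEmbedding f (Icc 0 r)
  simpa [hf _] using hneg

lemma lintegral_Icc_neg_abs_rpow_le {s q r : ℝ} (hs : -1 < s) (hq : 0 ≤ q) (hr : 0 ≤ r) :
    ∫⁻ c in Icc (-q) r, ENNReal.ofReal (|c| ^ s) ≤
      ENNReal.ofReal ((q ^ (s + 1) + r ^ (s + 1)) / (s + 1)) := by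
  have hs₁ : 0 < s + 1 := by linarith
  have heven : (fun c : ℝ ↦ ENNReal.ofReal (|c| ^ s)).Even := fun c ↦ by simp only [abs_neg]
  rw [← Icc_union_Icc_eq_Icc (neg_nonpos.2 hq) hr, add_div,
    ENNReal.ofReal_add (by positivity) (by positivity), ← lintegral_Icc_zero_abs_rpow hs hq,
    ← lintegral_Icc_zero_abs_rpow hs hr, ← lintegral_Icc_neg_zero_of_even heven]
  exact lintegral_union_le _ _ _

end Integrals

lemma two_rpow_mul_three_sub_le {p : ℝ} (hp : p ∈ Icc (2 : ℝ) 3) : 2 ^ p * (3 - p) ≤ 4 := by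
  obtain ⟨hp₂, hp₃⟩ := hp
  have hbernoulli : (2 : ℝ) ^ (p - 2) ≤ p - 1 := by
    have h := rpow_one_add_le_one_add_mul_self (s := 1) (by norm_num) (sub_nonneg.2 hp₂)
      (by linarith)
    norm_num at h
    linarith
  have htwo : (2 : ℝ) ^ p = 4 * 2 ^ (p - 2) := by
    rw [Real.rpow_sub two_pos, Real.rpow_two]
    ring
  calc (2 : ℝ) ^ p * (3 - p) ≤ 4 * (p - 1) * (3 - p) := by
        rw [htwo]
        gcongr
    _ ≤ 4 := by nlinarith [sq_nonneg (p - 2)]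

lemma three_mul_two_rpow_mul_pi_sq_div_le {p : ℝ} (hp : p ∈ Ico (2 : ℝ) 3) :
    3 * 2 ^ p * Real.pi ^ 2 * (1 + (1 + 1) / 4) / (3 - p) ≤ 72 * Real.pi / (3 - p) ^ 2 := by
  have ht : 0 < 3 - p := sub_pos.2 hp.2
  have htwo := two_rpow_mul_three_sub_le (Ico_subset_Icc_self hp)
  calc 3 * 2 ^ p * Real.pi ^ 2 * (1 + (1 + 1) / 4) / (3 - p)
      = 9 / 2 * (2 ^ p * (3 - p)) * Real.pi * Real.pi / (3 - p) ^ 2 := by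
        field_simp
        ring
    _ ≤ 9 / 2 * 4 * 4 * Real.pi / (3 - p) ^ 2 := by
        gcongr
        exact Real.pi_le_four
    _ = 72 * Real.pi / (3 - p) ^ 2 := by ring

section Tee

variable {n : ℕ} {u v : EuclideanSpace ℝ (Fin n)} (hu : ‖u‖ = 1) (hv : ‖v‖ = 1)
  (huv : inner ℝ u v = 0) {p : ℝ} (hp : p ∈ Ico (2 : ℝ) 3) {q r s : ℝ} (hq : 0 ≤ q) (hr : 0 ≤ r)
  (hs : 0 ≤ s)
include hu hv huv hp hq hr hs

lemma mengerEnergy_bar_bar_stem_le :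
    mengerEnergy p ((volume.restrict (Icc (-q) r)).map (· • u))
        ((volume.restrict (Icc (-q) r)).map (· • u)) ((volume.restrict (Icc 0 s)).map (· • v)) ≤
      ENNReal.ofReal (2 ^ p * Real.pi ^ 2 * (s ^ (3 - p) / (3 - p))) := by
  have hbound := mengerEnergy_map_smul_le hu hv huv hp.1 Real.pi_pos.le
    (fun c ↦ lintegral_Icc_inv_one_add_div_sq_le (by linarith : -q ≤ r)) (volume.restrict (Icc 0 s))
  rwa [lintegral_Icc_zero_abs_rpow (by linarith [hp.2]) hs, ← ENNReal.ofReal_mul (by positivity),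
    (by ring : 2 - p + 1 = 3 - p)] at hbound

lemma mengerEnergy_stem_stem_bar_le :
    mengerEnergy p ((volume.restrict (Icc 0 s)).map (· • v))
        ((volume.restrict (Icc 0 s)).map (· • v)) ((volume.restrict (Icc (-q) r)).map (· • u)) ≤
      ENNReal.ofReal
        (2 ^ p * (Real.pi / 2) ^ 2 * ((q ^ (3 - p) + r ^ (3 - p)) / (3 - p))) := by
  have hbound := mengerEnergy_map_smul_le hv hu (inner_eq_zero_symm.1 huv) hp.1
    Real.pi_div_two_pos.le (fun c ↦ lintegral_Icc_zero_inv_one_add_div_sq_le hs)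
    (volume.restrict (Icc (-q) r))
  grw [lintegral_Icc_neg_abs_rpow_le (by linarith [hp.2]) hq hr] at hbound
  rwa [← ENNReal.ofReal_mul (by positivity), (by ring : 2 - p + 1 = 3 - p)] at hbound

theorem Eset_energyM_lt_top_general :
    energyM p 1 ((· • u) '' Icc (-q) r ∪ (· • v) '' Icc 0 s) ≤
      ENNReal.ofReal (3 * 2 ^ p * Real.pi ^ 2 *
        (s ^ (3 - p) + (q ^ (3 - p) + r ^ (3 - p)) / 4) / (3 - p)) := by
  have hp₀ : 0 < p := by linarith [hp.1]
  have ht : 0 < 3 - p := sub_pos.2 hp.2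
  have hbar := hausdorffMeasure_restrict_image_of_isometry (isometry_smul_right_of_norm_eq_one hu)
    (Icc (-q) r)
  have hstem := hausdorffMeasure_restrict_image_of_isometry (isometry_smul_right_of_norm_eq_one hv)
    (Icc 0 s)
  have : SFinite (μH[1].restrict ((· • u) '' Icc (-q) r)) := hbar ▸ inferInstance
  have : SFinite (μH[1].restrict ((· • v) '' Icc 0 s)) := hstem ▸ inferInstance
  grw [energyM_union_le, hbar, hstem, mengerEnergy_map_smul_self hu hp₀,
    mengerEnergy_map_smul_self hv hp₀, mengerEnergy_bar_bar_stem_le hu hv huv hp hq hr hs,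
    mengerEnergy_stem_stem_bar_le hu hv huv hp hq hr hs]
  rw [zero_add, add_zero, ← ENNReal.ofReal_ofNat 3, ← ENNReal.ofReal_mul (by positivity),
    ← ENNReal.ofReal_mul (by positivity), ← ENNReal.ofReal_add (by positivity) (by positivity)]
  apply le_of_eq
  congr 1
  ring

end Tee

lemma image_smul_single {ι : Type*} [DecidableEq ι] (i : ι) (s : Set ℝ) :
    (fun t : ℝ ↦ t • EuclideanSpace.single i (1 : ℝ)) '' s =
      {x | (∀ j ≠ i, x j = 0) ∧ x i ∈ s} := by
  ext x
  constructor
  · rintro ⟨t, ht, rfl⟩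
    exact ⟨fun j hj ↦ by simp [hj], by simpa using ht⟩
  · rintro ⟨hzero, hi⟩
    refine ⟨x i, hi, ?_⟩
    ext j
    rcases eq_or_ne j i with rfl | hj
    · simp
    · simp [hj, hzero j hj]

lemma Eset_eq_union_image_smul_single : Eset =
    (· • EuclideanSpace.single 0 1) '' Icc (-1 : ℝ) 1 ∪
      (· • EuclideanSpace.single 1 1) '' Icc (0 : ℝ) 1 := by
  rw [image_smul_single, image_smul_single]
  simp [Eset, Fin.forall_fin_two]

theorem Eset_energyM_lt_top (p : ℝ) (hp : p ∈ Set.Ico (2 : ℝ) 3) :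
    energyM p 1 Eset ≤ ENNReal.ofReal (72 * Real.pi / (3 - p) ^ 2) ∧
    energyM p 1 Eset < ⊤ := by
  have hle := Eset_energyM_lt_top_general (u := EuclideanSpace.single (0 : Fin 2) 1)
    (v := EuclideanSpace.single 1 1) (by simp) (by simp)
    (by simp [EuclideanSpace.inner_single_left]) hp zero_le_one zero_le_one zero_le_one
  simp only [← Eset_eq_union_image_smul_single, Real.one_rpow] at hle
  grw [three_mul_two_rpow_mul_pi_sq_div_le hp] at hle
  exact ⟨hle, hle.trans_lt ENNReal.ofReal_lt_top⟩

end
end
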